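/- arXiv:1507.05304 — 11 statements merged into one kernel-verified Lean document; each statement's English description precedes it below -/
import Mathlib

section
/- Popoviciu's inequality: a continuous real-valued function f defined on an interval I ⊆ ℝ is convex if and only if for all x, y, z ∈ I one has (f(x)+f(y)+f(z))/3 + f((x+y+z)/3) ≥ (2/3)·(f((x+y)/2) + f((y+z)/2) + f((z+x)/2)). -/
/-!
If `f` is convex and `m` is the mean of `x ≤ y ≤ z` with, say, `y ≤ m`, then the midpoints of `y, z`
and of `z, x` both lie between `m` and `z`. Bounding `f` there by its chord over `[m, z]`, and
`f ((x + y) / 2)` by `(f x + f y) / 2`, gives Popoviciu's inequality.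

Conversely, Popoviciu's inequality at `x, y, y` reads `4 f m ≤ f (m - t) + 3 f (m + t / 3)`, where
`x = m - t` and `y = m + t`. If `f` exceeded one of its chords, this would fail at the leftmost
maximum `m` of the difference, for any `t > 0` with `m ± t` in the interval of that chord.
-/

open Set

section Convex

variable {𝕜 E β : Type*} [Field 𝕜] [LinearOrder 𝕜] [IsStrictOrderedRing 𝕜]
  [AddCommGroup β] [PartialOrder β] [IsOrderedAddMonoid β] [Module 𝕜 β]

lemma map_add_map_le_of_mem_segment [AddCommGroup E] [Module 𝕜 E] {s : Set E} {f : E → β}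
    (hf : ConvexOn 𝕜 s f) {a b u v : E} (ha : a ∈ s) (hb : b ∈ s)
    (hu : u ∈ segment 𝕜 a b) (hv : v ∈ segment 𝕜 a b) {p q : 𝕜} (hpq : p + q = 2)
    (huv : u + v = p • a + q • b) :
    f u + f v ≤ p • f a + q • f b := by
  obtain ⟨u₁, u₂, hu₁, hu₂, hu, rfl⟩ := hu
  obtain ⟨v₁, v₂, hv₁, hv₂, hv, rfl⟩ := hv
  have hle := add_le_add (hf.2 ha hb hu₁ hu₂ hu) (hf.2 ha hb hv₁ hv₂ hv)
  obtain rfl : u₁ = 1 - u₂ := by linarith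
  obtain rfl : v₁ = 1 - v₂ := by linarith
  obtain rfl : p = 2 - q := by linarith
  have hsmul : (u₂ + v₂ - q) • (b - a) = 0 := by
    rw [← sub_eq_zero] at huv
    rw [← huv]
    module
  refine hle.trans_eq ?_
  rcases smul_eq_zero.1 hsmul with h | h
  · obtain rfl : q = u₂ + v₂ := (sub_eq_zero.1 h).symm
    module
  · obtain rfl : b = a := sub_eq_zero.1 h
    module

lemma popoviciu_of_midpoint_mem_segment [AddCommGroup E] [Module 𝕜 E] [PosSMulMono 𝕜 β]
    {s : Set E} {f : E → β} (hf : ConvexOn 𝕜 s f) {x y z m : E} (hx : x ∈ s) (hy : y ∈ s)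
    (hz : z ∈ s) (hm : m ∈ s) (hmean : (3 : 𝕜) • m = x + y + z)
    (hyz : midpoint 𝕜 y z ∈ segment 𝕜 m z) (hzx : midpoint 𝕜 z x ∈ segment 𝕜 m z) :
    (2 / 3 : 𝕜) • (f (midpoint 𝕜 x y) + f (midpoint 𝕜 y z) + f (midpoint 𝕜 z x)) ≤
      (1 / 3 : 𝕜) • (f x + f y + f z) + f m := by
  have hxy : f (midpoint 𝕜 x y) ≤ (1 / 2 : 𝕜) • f x + (1 / 2 : 𝕜) • f y := by
    have hmid : midpoint 𝕜 x y = (1 / 2 : 𝕜) • x + (1 / 2 : 𝕜) • y := by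
      simp [midpoint_eq_smul_add]
    rw [hmid]
    exact hf.2 hx hy one_half_pos.le one_half_pos.le (add_halves 1)
  have hmz : f (midpoint 𝕜 y z) + f (midpoint 𝕜 z x) ≤ (3 / 2 : 𝕜) • f m + (1 / 2 : 𝕜) • f z := by
    refine map_add_map_le_of_mem_segment hf hm hz hyz hzx (by norm_num) ?_
    obtain rfl : m = (1 / 3 : 𝕜) • (x + y + z) := by rw [← hmean]; module
    simp only [midpoint_eq_smul_add, invOf_eq_inv]
    module
  calc (2 / 3 : 𝕜) • (f (midpoint 𝕜 x y) + f (midpoint 𝕜 y z) + f (midpoint 𝕜 z x))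
      ≤ (2 / 3 : 𝕜) • (((1 / 2 : 𝕜) • f x + (1 / 2 : 𝕜) • f y)
          + ((3 / 2 : 𝕜) • f m + (1 / 2 : 𝕜) • f z)) := by
        rw [add_assoc (f _)]
        gcongr
    _ = (1 / 3 : 𝕜) • (f x + f y + f z) + f m := by module

variable [PosSMulMono 𝕜 β] {s : Set 𝕜} {f : 𝕜 → β} {x y z : 𝕜}

lemma popoviciu_of_le (hf : ConvexOn 𝕜 s f) (hx : x ∈ s) (hz : z ∈ s) (hxy : x ≤ y) (hyz : y ≤ z) :
    (2 / 3 : 𝕜) • (f ((x + y) / 2) + f ((y + z) / 2) + f ((z + x) / 2)) ≤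
      (1 / 3 : 𝕜) • (f x + f y + f z) + f ((x + y + z) / 3) := by
  have midpoint_eq (a b : 𝕜) : midpoint 𝕜 a b = (a + b) / 2 := by
    simp [midpoint_eq_smul_add, inv_mul_eq_div]
  have hs : Icc x z ⊆ s := hf.1.ordConnected.out hx hz
  have hy : y ∈ s := hs ⟨hxy, hyz⟩
  have hm : (x + y + z) / 3 ∈ s := hs ⟨by linarith, by linarith⟩
  rcases le_total y ((x + y + z) / 3) with hym | hmy
  · have hseg : segment 𝕜 ((x + y + z) / 3) z = Icc ((x + y + z) / 3) z :=
      segment_eq_Icc (by linarith)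
    simpa only [midpoint_eq] using
      popoviciu_of_midpoint_mem_segment hf hx hy hz hm (by rw [smul_eq_mul]; ring)
        (by rw [hseg, midpoint_eq]; constructor <;> linarith)
        (by rw [hseg, midpoint_eq]; constructor <;> linarith)
  · have hseg : segment 𝕜 ((x + y + z) / 3) x = Icc x ((x + y + z) / 3) := by
      rw [segment_symm, segment_eq_Icc (by linarith)]
    simpa only [midpoint_eq, add_comm, add_left_comm, add_assoc] using
      popoviciu_of_midpoint_mem_segment hf hy hz hx hm (by rw [smul_eq_mul]; ring)
        (by rw [hseg, midpoint_eq]; constructor <;> linarith)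
        (by rw [hseg, midpoint_eq]; constructor <;> linarith)

theorem popoviciu_of_convexOn (hf : ConvexOn 𝕜 s f) (hx : x ∈ s) (hy : y ∈ s) (hz : z ∈ s) :
    (2 / 3 : 𝕜) • (f ((x + y) / 2) + f ((y + z) / 2) + f ((z + x) / 2)) ≤
      (1 / 3 : 𝕜) • (f x + f y + f z) + f ((x + y + z) / 3) := by
  wlog hxy : x ≤ y generalizing x y
  · simpa only [add_comm, add_left_comm, add_assoc] using this hy hx (le_of_not_ge hxy)
  rcases le_total y z with hyz | hzy
  · exact popoviciu_of_le hf hx hz hxy hyz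
  rcases le_total x z with hxz | hzx
  · simpa only [add_comm, add_left_comm, add_assoc] using popoviciu_of_le hf hx hy hxz hzy
  · simpa only [add_comm, add_left_comm, add_assoc] using popoviciu_of_le hf hz hy hzx hxy

end Convex

section Real

lemma le_max_of_forall_exists_Ico_Ioc {a b : ℝ} {g : ℝ → ℝ}
    (hg : UpperSemicontinuousOn g (Icc a b))
    (h : ∀ m ∈ Ioo a b, ∃ u ∈ Ico a m, ∃ v ∈ Ioc m b,
      (v - u) * g m ≤ (v - m) * g u + (m - u) * g v)
    {c : ℝ} (hc : c ∈ Icc a b) : g c ≤ max (g a) (g b) := by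
  by_contra! hlt
  obtain ⟨p, hp, hmax⟩ := hg.exists_isMaxOn ⟨c, hc⟩ isCompact_Icc
  obtain ⟨m, ⟨hm, hpm : g p ≤ g m⟩, hleast⟩ :=
    (hg.isCompact_inter_preimage_Ici isCompact_Icc (g p)).exists_isLeast
      ⟨p, hp, mem_preimage.2 self_mem_Ici⟩
  have hcm : g c ≤ g m := (hmax hc).trans hpm
  have ham : a ≠ m := by
    rintro rfl
    exact ((le_max_left _ _).trans_lt hlt).not_ge hcm
  have hmb : m ≠ b := by
    rintro rfl
    exact ((le_max_right _ _).trans_lt hlt).not_ge hcm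
  obtain ⟨u, ⟨hau, hum⟩, v, ⟨hmv, hvb⟩, hle⟩ := h m ⟨hm.1.lt_of_ne ham, hm.2.lt_of_ne hmb⟩
  have hu : g u < g m := by
    by_contra! hmu
    exact hum.not_ge (hleast ⟨⟨hau, hum.le.trans hm.2⟩, hpm.trans hmu⟩)
  have hv : g v ≤ g m := (hmax ⟨hm.1.trans hmv.le, hvb⟩ : g v ≤ g p).trans hpm
  have : (v - m) * g u + (m - u) * g v < (v - u) * g m :=
    calc (v - m) * g u + (m - u) * g v < (v - m) * g m + (m - u) * g m :=
          add_lt_add_of_lt_of_le (mul_lt_mul_of_pos_left hu (sub_pos.2 hmv))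
            (mul_le_mul_of_nonneg_left hv (sub_nonneg.2 hum.le))
      _ = (v - u) * g m := by ring
  exact this.not_ge hle

variable {s : Set ℝ} {f : ℝ → ℝ}

theorem convexOn_of_forall_exists_Ico_Ioc (hs : Convex ℝ s) (hf : UpperSemicontinuousOn f s)
    (h : ∀ a ∈ s, ∀ b ∈ s, ∀ m ∈ Ioo a b, ∃ u ∈ Ico a m, ∃ v ∈ Ioc m b,
      (v - u) * f m ≤ (v - m) * f u + (m - u) * f v) :
    ConvexOn ℝ s f := by
  refine LinearOrder.convexOn_of_lt hs fun a ha b hb hab p q hp hq hpq => ?_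
  obtain ⟨k, hk⟩ : ∃ k, k * (b - a) = f b - f a := ⟨_, div_mul_cancel₀ _ (sub_pos.2 hab).ne'⟩
  have hg : UpperSemicontinuousOn (fun t => f t + -k * t) (Icc a b) :=
    (hf.mono (hs.ordConnected.out ha hb)).add
      (ContinuousOn.upperSemicontinuousOn (by fun_prop))
  have hc : p • a + q • b ∈ Icc a b :=
    segment_subset_Icc hab.le ⟨p, q, hp.le, hq.le, hpq, rfl⟩
  have hmax := le_max_of_forall_exists_Ico_Ioc hg (fun m hm => ?_) hc
  · have hends : f b + -k * b = f a + -k * a := by linarith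
    rw [hends, max_self] at hmax
    obtain rfl : p = 1 - q := by linarith
    simp only [smul_eq_mul] at hmax ⊢
    linear_combination hmax + q * hk
  · obtain ⟨u, hu, v, hv, huv⟩ := h a ha b hb m hm
    exact ⟨u, hu, v, hv, by linear_combination huv⟩

theorem convexOn_of_four_mul_map_le (hs : Convex ℝ s) (hf : UpperSemicontinuousOn f s)
    (h : ∀ x ∈ s, ∀ y ∈ s, 4 * f ((x + y) / 2) ≤ f x + 3 * f ((x + y + y) / 3)) :
    ConvexOn ℝ s f := by
  refine convexOn_of_forall_exists_Ico_Ioc hs hf fun a ha b hb m hm => ?_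
  obtain ⟨t, ht, hta, htb⟩ : ∃ t > 0, t ≤ m - a ∧ t ≤ b - m :=
    ⟨min (m - a) (b - m), lt_min (sub_pos.2 hm.1) (sub_pos.2 hm.2), min_le_left _ _,
      min_le_right _ _⟩
  have hsub : Icc a b ⊆ s := hs.ordConnected.out ha hb
  have hfour : 4 * f m ≤ f (m - t) + 3 * f (m + t / 3) := by
    convert h (m - t) (hsub ⟨by linarith, by linarith⟩) (m + t)
      (hsub ⟨by linarith, by linarith⟩) using 3 <;> ring_nf
  refine ⟨m - t, ⟨by linarith, by linarith⟩, m + t / 3, ⟨by linarith, by linarith⟩, ?_⟩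
  linear_combination t / 3 * hfour

theorem convexOn_of_popoviciu (hs : Convex ℝ s) (hf : UpperSemicontinuousOn f s)
    (h : ∀ x ∈ s, ∀ y ∈ s, ∀ z ∈ s,
      (f x + f y + f z) / 3 + f ((x + y + z) / 3) ≥
        (2 / 3) * (f ((x + y) / 2) + f ((y + z) / 2) + f ((z + x) / 2))) :
    ConvexOn ℝ s f := by
  refine convexOn_of_four_mul_map_le hs hf fun x hx y hy => ?_
  have hxyy := h x hx y hy y hy
  rw [add_self_div_two, add_comm y x] at hxyy
  linarith

end Real

theorem popoviciu_iff_convex_general (I : Set ℝ) (hI : Convex ℝ I) (f : ℝ → ℝ)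
    (hf : UpperSemicontinuousOn f I) :
    ConvexOn ℝ I f ↔
      ∀ x ∈ I, ∀ y ∈ I, ∀ z ∈ I,
        (f x + f y + f z) / 3 + f ((x + y + z) / 3) ≥
          (2 / 3) * (f ((x + y) / 2) + f ((y + z) / 2) + f ((z + x) / 2)) := by
  refine ⟨fun h x hx y hy z hz => ?_, convexOn_of_popoviciu hI hf⟩
  have := popoviciu_of_convexOn h hx hy hz
  simp only [smul_eq_mul] at this
  linarith

/-- Popoviciu's inequality: a continuous real-valued function `f` on an interval
`I ⊆ ℝ` is convex iff it satisfies Popoviciu's inequality on `I`. -/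
theorem popoviciu_iff_convex (I : Set ℝ) (hI : Convex ℝ I) (f : ℝ → ℝ)
    (hf : ContinuousOn f I) :
    ConvexOn ℝ I f ↔
      ∀ x ∈ I, ∀ y ∈ I, ∀ z ∈ I,
        (f x + f y + f z) / 3 + f ((x + y + z) / 3) ≥
          (2 / 3) * (f ((x + y) / 2) + f ((y + z) / 2) + f ((z + x) / 2)) :=
  popoviciu_iff_convex_general I hI f hf.upperSemicontinuousOn
end

section
/- Let f be twice continuously differentiable on [a,b], M = sup{f''(x) : x ∈ [a,b]} and m = inf{f''(x) : x ∈ [a,b]}. Then for all x, y, z ∈ [a,b]: (M/36)·((x−y)² + (y−z)² + (z−x)²) ≥ (f(x)+f(y)+f(z))/3 + f((x+y+z)/3) − (2/3)·(f((x+y)/2) + f((y+z)/2) + f((z+x)/2)) ≥ (m/36)·((x−y)² + (y−z)² + (z−x)²). -/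
/-!
The Popoviciu functional is linear in `f` and nonnegative when `f` is convex: two of the three
points, say `x` and `y`, lie on the same side of the mean `c`, so the midpoints of `x, z` and of
`y, z` lie between `c` and `z`, where `f` is below its chord; adding these two chord bounds to
midpoint convexity at `x, y` gives Popoviciu's inequality. As the functional takes the value
`((x - y) ^ 2 + (y - z) ^ 2 + (z - x) ^ 2) / 36` at `t ↦ t ^ 2 / 2`, both bounds follow from the
convexity of `f t - m t ^ 2 / 2` and of `M t ^ 2 / 2 - f t`.
-/

section Field

variable {𝕜 : Type*} [Field 𝕜]

/-- The Popoviciu functional of `f` at three points: the difference of the two sides of Popoviciu's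
inequality, normalized so that the values at the points have total weight `1`. -/
def popoviciuGap (f : 𝕜 → 𝕜) (x y z : 𝕜) : 𝕜 :=
  (f x + f y + f z) / 3 + f ((x + y + z) / 3) -
    (2 / 3) * (f ((x + y) / 2) + f ((y + z) / 2) + f ((z + x) / 2))

theorem popoviciuGap_rotate (f : 𝕜 → 𝕜) (x y z : 𝕜) :
    popoviciuGap f y z x = popoviciuGap f x y z := by
  unfold popoviciuGap
  rw [show y + z + x = x + y + z by ring]
  ring

theorem popoviciuGap_neg (f : 𝕜 → 𝕜) (x y z : 𝕜) :
    popoviciuGap (fun t ↦ -f t) x y z = -popoviciuGap f x y z := by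
  unfold popoviciuGap
  ring

theorem popoviciuGap_sub (f g : 𝕜 → 𝕜) (x y z : 𝕜) :
    popoviciuGap (fun t ↦ f t - g t) x y z = popoviciuGap f x y z - popoviciuGap g x y z := by
  unfold popoviciuGap
  ring

theorem popoviciuGap_const_mul (c : 𝕜) (f : 𝕜 → 𝕜) (x y z : 𝕜) :
    popoviciuGap (fun t ↦ c * f t) x y z = c * popoviciuGap f x y z := by
  unfold popoviciuGap
  ring

theorem popoviciuGap_sq [CharZero 𝕜] (x y z : 𝕜) :
    popoviciuGap (fun t ↦ t ^ 2) x y z = ((x - y) ^ 2 + (y - z) ^ 2 + (z - x) ^ 2) / 18 := by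
  unfold popoviciuGap
  ring

end Field

section OrderedField

variable {𝕜 : Type*} [Field 𝕜] [LinearOrder 𝕜] [IsStrictOrderedRing 𝕜] {s : Set 𝕜} {f : 𝕜 → 𝕜}

theorem le_add_slope_mul_of_convexOn (hf : ConvexOn 𝕜 s f) {p q t : 𝕜} (hp : p ∈ s) (hq : q ∈ s)
    (ht : t ∈ Set.uIcc p q) : f t ≤ f p + slope f p q * (t - p) := by
  rw [← segment_eq_uIcc] at ht
  obtain ⟨α, β, hα, hβ, hαβ, rfl⟩ := ht
  have hslope : (q - p) * slope f p q = f q - f p := sub_smul_slope f p q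
  obtain rfl : α = 1 - β := eq_sub_of_add_eq hαβ
  calc f ((1 - β) • p + β • q) ≤ (1 - β) • f p + β • f q := hf.2 hp hq hα hβ hαβ
    _ = f p + β * (f q - f p) := by simp only [smul_eq_mul]; ring
    _ = f p + slope f p q * ((1 - β) • p + β • q - p) := by
      rw [← hslope]; simp only [smul_eq_mul]; ring

theorem popoviciuGap_nonneg_of_same_side (hf : ConvexOn 𝕜 s f) {x y z : 𝕜} (hx : x ∈ s)
    (hy : y ∈ s) (hz : z ∈ s)
    (hside : x ≤ (x + y + z) / 3 ∧ y ≤ (x + y + z) / 3 ∨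
      (x + y + z) / 3 ≤ x ∧ (x + y + z) / 3 ≤ y) :
    0 ≤ popoviciuGap f x y z := by
  unfold popoviciuGap
  set c := (x + y + z) / 3 with hc
  have hc_mem : c ∈ s := hf.1.ordConnected.uIcc_subset hx hz <| Set.mem_uIcc.2 <|
    hside.imp (fun h ↦ ⟨h.1, by linarith⟩) (fun h ↦ ⟨by linarith, h.1⟩)
  have hyz : f ((y + z) / 2) ≤ f c + slope f c z * ((y + z) / 2 - c) :=
    le_add_slope_mul_of_convexOn hf hc_mem hz <| Set.mem_uIcc.2 <|
      hside.imp (fun _ ↦ ⟨by linarith, by linarith⟩) (fun _ ↦ ⟨by linarith, by linarith⟩)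
  have hzx : f ((z + x) / 2) ≤ f c + slope f c z * ((z + x) / 2 - c) :=
    le_add_slope_mul_of_convexOn hf hc_mem hz <| Set.mem_uIcc.2 <|
      hside.imp (fun _ ↦ ⟨by linarith, by linarith⟩) (fun _ ↦ ⟨by linarith, by linarith⟩)
  have hchord : slope f c z * ((y + z) / 2 - c) + slope f c z * ((z + x) / 2 - c) =
      (f z - f c) / 2 := by
    have hslope : (z - c) * slope f c z = f z - f c := sub_smul_slope f c z
    rw [← hslope, hc]
    ring
  have hxy : f ((x + y) / 2) ≤ (f x + f y) / 2 := by
    simpa only [smul_eq_mul, one_div_mul_eq_div, add_div] using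
      hf.2 hx hy one_half_pos.le one_half_pos.le (add_halves 1)
  linarith

theorem popoviciuGap_nonneg_of_convexOn (hf : ConvexOn 𝕜 s f) {x y z : 𝕜} (hx : x ∈ s)
    (hy : y ∈ s) (hz : z ∈ s) : 0 ≤ popoviciuGap f x y z := by
  have hyzx : y + z + x = x + y + z := by ring
  have hzxy : z + x + y = x + y + z := by ring
  have hside (c : 𝕜) : (x ≤ c ∧ y ≤ c ∨ c ≤ x ∧ c ≤ y) ∨ (y ≤ c ∧ z ≤ c ∨ c ≤ y ∧ c ≤ z) ∨
      (z ≤ c ∧ x ≤ c ∨ c ≤ z ∧ c ≤ x) := by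
    grind
  obtain hxy | hyz | hzx := hside ((x + y + z) / 3)
  · exact popoviciuGap_nonneg_of_same_side hf hx hy hz hxy
  · rw [← popoviciuGap_rotate]
    exact popoviciuGap_nonneg_of_same_side hf hy hz hx (by rwa [hyzx])
  · rw [← popoviciuGap_rotate, ← popoviciuGap_rotate]
    exact popoviciuGap_nonneg_of_same_side hf hz hx hy (by rwa [hzxy])

end OrderedField

section Real

variable {s : Set ℝ} {f f' f'' : ℝ → ℝ} {m M x y z : ℝ}

theorem le_popoviciuGap_of_strongConvexOn (hf : StrongConvexOn s m f) (hx : x ∈ s) (hy : y ∈ s)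
    (hz : z ∈ s) :
    m / 36 * ((x - y) ^ 2 + (y - z) ^ 2 + (z - x) ^ 2) ≤ popoviciuGap f x y z := by
  have hconv : ConvexOn ℝ s fun t ↦ f t - m / 2 * t ^ 2 := by
    simpa only [Real.norm_eq_abs, sq_abs] using strongConvexOn_iff_convex.1 hf
  have hgap := popoviciuGap_nonneg_of_convexOn hconv hx hy hz
  rw [popoviciuGap_sub, popoviciuGap_const_mul, popoviciuGap_sq] at hgap
  linarith

theorem strongConvexOn_of_le_hasDerivWithinAt2 (hs : Convex ℝ s) (hf : ContinuousOn f s)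
    (hf' : ∀ t ∈ interior s, HasDerivWithinAt f (f' t) (interior s) t)
    (hf'' : ∀ t ∈ interior s, HasDerivWithinAt f' (f'' t) (interior s) t)
    (hm : ∀ t ∈ interior s, m ≤ f'' t) : StrongConvexOn s m f := by
  simp only [strongConvexOn_iff_convex, Real.norm_eq_abs, sq_abs]
  refine convexOn_of_hasDerivWithinAt2_nonneg hs (f' := fun t ↦ f' t - m * t)
    (f'' := fun t ↦ f'' t - m) (by fun_prop) (fun t ht ↦ ?_) (fun t ht ↦ ?_)
    (fun t ht ↦ sub_nonneg.2 (hm t ht))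
  · exact ((hf' t ht).sub
      ((hasDerivAt_pow 2 t).const_mul (m / 2)).hasDerivWithinAt).congr_deriv (by push_cast; ring)
  · exact ((hf'' t ht).sub
      ((hasDerivAt_id t).const_mul m).hasDerivWithinAt).congr_deriv (by ring)

theorem popoviciu_C2_general (hs : Convex ℝ s) (hf : ContinuousOn f s)
    (hf' : ∀ t ∈ interior s, HasDerivWithinAt f (f' t) (interior s) t)
    (hf'' : ∀ t ∈ interior s, HasDerivWithinAt f' (f'' t) (interior s) t)
    (hM : ∀ t ∈ interior s, f'' t ≤ M) (hm : ∀ t ∈ interior s, m ≤ f'' t)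
    (hx : x ∈ s) (hy : y ∈ s) (hz : z ∈ s) :
    popoviciuGap f x y z ≤ M / 36 * ((x - y) ^ 2 + (y - z) ^ 2 + (z - x) ^ 2) ∧
      m / 36 * ((x - y) ^ 2 + (y - z) ^ 2 + (z - x) ^ 2) ≤ popoviciuGap f x y z := by
  have hlower : StrongConvexOn s m f := strongConvexOn_of_le_hasDerivWithinAt2 hs hf hf' hf'' hm
  have hupper : StrongConvexOn s (-M) fun t ↦ -f t :=
    strongConvexOn_of_le_hasDerivWithinAt2 hs hf.neg (fun t ht ↦ (hf' t ht).neg)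
      (fun t ht ↦ (hf'' t ht).neg) (fun t ht ↦ neg_le_neg (hM t ht))
  have hgap := le_popoviciuGap_of_strongConvexOn hupper hx hy hz
  rw [popoviciuGap_neg] at hgap
  exact ⟨by linarith, le_popoviciuGap_of_strongConvexOn hlower hx hy hz⟩

end Real

/-- Popoviciu-type two-sided estimate for `C²` functions on `[a,b]`, with
`M = sup f''` and `m = inf f''` on `[a,b]`. -/
theorem popoviciu_C2 (a b : ℝ) (hab : a ≤ b) (f f' f'' : ℝ → ℝ)
    (hf' : ∀ x ∈ Set.Icc a b, HasDerivWithinAt f (f' x) (Set.Icc a b) x)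
    (hf'' : ∀ x ∈ Set.Icc a b, HasDerivWithinAt f' (f'' x) (Set.Icc a b) x)
    (hcont : ContinuousOn f'' (Set.Icc a b))
    (M m : ℝ) (hM : M = sSup (f'' '' Set.Icc a b)) (hm : m = sInf (f'' '' Set.Icc a b)) :
    ∀ x ∈ Set.Icc a b, ∀ y ∈ Set.Icc a b, ∀ z ∈ Set.Icc a b,
      (M / 36) * ((x - y) ^ 2 + (y - z) ^ 2 + (z - x) ^ 2) ≥
        (f x + f y + f z) / 3 + f ((x + y + z) / 3) -
          (2 / 3) * (f ((x + y) / 2) + f ((y + z) / 2) + f ((z + x) / 2)) ∧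
      (f x + f y + f z) / 3 + f ((x + y + z) / 3) -
          (2 / 3) * (f ((x + y) / 2) + f ((y + z) / 2) + f ((z + x) / 2)) ≥
        (m / 36) * ((x - y) ^ 2 + (y - z) ^ 2 + (z - x) ^ 2) := by
  intro x hx y hy z hz
  have hf''M : ∀ t ∈ Set.Icc a b, f'' t ≤ M := fun t ht ↦
    hM ▸ le_csSup (isCompact_Icc.bddAbove_image hcont) (Set.mem_image_of_mem f'' ht)
  have hmf'' : ∀ t ∈ Set.Icc a b, m ≤ f'' t := fun t ht ↦
    hm ▸ csInf_le (isCompact_Icc.bddBelow_image hcont) (Set.mem_image_of_mem f'' ht)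
  exact popoviciu_C2_general (convex_Icc a b) (HasDerivWithinAt.continuousOn hf')
    (fun t ht ↦ (hf' t (interior_subset ht)).mono interior_subset)
    (fun t ht ↦ (hf'' t (interior_subset ht)).mono interior_subset)
    (fun t ht ↦ hf''M t (interior_subset ht)) (fun t ht ↦ hmf'' t (interior_subset ht)) hx hy hz
end

section
/- If f : [a,b] → ℝ is strongly convex with modulus C > 0, i.e. the function x ↦ f(x) − (C/2)x² is convex on [a,b], then for all x, y, z ∈ [a,b]: (f(x)+f(y)+f(z))/3 + f((x+y+z)/3) − (2/3)·(f((x+y)/2) + f((y+z)/2) + f((z+x)/2)) ≥ (C/36)·((x−y)² + (y−z)² + (z−x)²). -/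
/-!
Let `m` be the mean of `x, y, z`. Two of the three points, say `x` and `y`, lie on the same side of
`m`, so `(y + z) / 2` and `(z + x) / 2` lie between `m` and `z`. Bounding `g` there by its chord
over `[m, z]`, and `g ((x + y) / 2)` by midpoint convexity, gives Popoviciu's inequality for a
convex function `g`. For `g x = x ^ 2` the two sides of that inequality differ by
`((x - y) ^ 2 + (y - z) ^ 2 + (z - x) ^ 2) / 6`, which is the source of the extra term when
`f x = g x + (C / 2) * x ^ 2`.
-/

section LinearOrderedField

variable {𝕜 : Type*} [Field 𝕜] [LinearOrder 𝕜] [IsStrictOrderedRing 𝕜]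

theorem add_div_two_mem_uIcc_of_mul_nonneg {x y z m : 𝕜} (hm : x + y + z = 3 * m)
    (hxy : 0 ≤ (x - m) * (y - m)) : (y + z) / 2 ∈ Set.uIcc m z := by
  rw [Set.mem_uIcc]
  rcases mul_nonneg_iff.mp hxy with ⟨hx, hy⟩ | ⟨hx, hy⟩
  · right; constructor <;> linarith
  · left; constructor <;> linarith

section Module

variable {E : Type*} [AddCommGroup E] [Module 𝕜 E] {s : Set E}

theorem inv_three_smul_add_mem_of_convex (hs : Convex 𝕜 s) {x y z : E} (hx : x ∈ s)
    (hy : y ∈ s) (hz : z ∈ s) : (3⁻¹ : 𝕜) • (x + y + z) ∈ s := by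
  have hxy : (2⁻¹ : 𝕜) • x + (2⁻¹ : 𝕜) • y ∈ s :=
    hs hx hy (by positivity) (by positivity) (by norm_num)
  have hxyz : (2 / 3 : 𝕜) • ((2⁻¹ : 𝕜) • x + (2⁻¹ : 𝕜) • y) + (3⁻¹ : 𝕜) • z ∈ s :=
    hs hxy hz (by positivity) (by positivity) (by norm_num)
  convert hxyz using 1
  module

end Module

variable {β : Type*} [AddCommGroup β] [PartialOrder β] [Module 𝕜 β]

theorem convexOn_le_chord {s : Set 𝕜} {g : 𝕜 → β} (hg : ConvexOn 𝕜 s g) {a b u : 𝕜}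
    (ha : a ∈ s) (hb : b ∈ s) (hu : u ∈ Set.uIcc a b) :
    g u ≤ g a + (u - a) • slope g a b := by
  rw [← segment_eq_uIcc] at hu
  obtain ⟨p, q, hp, hq, hpq, rfl⟩ := hu
  obtain rfl : p = 1 - q := eq_sub_of_add_eq hpq
  calc g ((1 - q) • a + q • b)
    _ ≤ (1 - q) • g a + q • g b := hg.2 ha hb hp hq hpq
    _ = g a + q • (g b - g a) := by module
    _ = g a + q • ((b - a) • slope g a b) := by rw [sub_smul_slope, vsub_eq_sub]
    _ = g a + ((1 - q) • a + q • b - a) • slope g a b := by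
      simp only [smul_eq_mul]
      module

variable [IsOrderedAddMonoid β]

theorem convexOn_two_nsmul_midpoint_le {E : Type*} [AddCommGroup E] [Module 𝕜 E] {s : Set E}
    {g : E → β} (hg : ConvexOn 𝕜 s g) {x y : E} (hx : x ∈ s) (hy : y ∈ s) :
    2 • g (midpoint 𝕜 x y) ≤ g x + g y := by
  have h : g (midpoint 𝕜 x y) ≤ (2⁻¹ : 𝕜) • g x + (2⁻¹ : 𝕜) • g y := by
    rw [midpoint_eq_smul_add, invOf_eq_inv, smul_add]
    exact hg.2 hx hy (by positivity) (by positivity) (by norm_num)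
  calc 2 • g (midpoint 𝕜 x y)
    _ ≤ 2 • ((2⁻¹ : 𝕜) • g x + (2⁻¹ : 𝕜) • g y) := nsmul_le_nsmul_right h 2
    _ = g x + g y := by module

variable {s : Set 𝕜} {g : 𝕜 → β}

theorem convexOn_add_le_of_mem_uIcc (hg : ConvexOn 𝕜 s g) {a b u v t : 𝕜} (ha : a ∈ s)
    (hb : b ∈ s) (hu : u ∈ Set.uIcc a b) (hv : v ∈ Set.uIcc a b)
    (huv : u + v = (2 - t) * a + t * b) : g u + g v ≤ (2 - t) • g a + t • g b := by
  have h_offset : (u - a) + (v - a) = t * (b - a) := by linear_combination huv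
  calc g u + g v
    _ ≤ (g a + (u - a) • slope g a b) + (g a + (v - a) • slope g a b) :=
      add_le_add (convexOn_le_chord hg ha hb hu) (convexOn_le_chord hg ha hb hv)
    _ = 2 • g a + ((u - a) + (v - a)) • slope g a b := by module
    _ = 2 • g a + t • (g b - g a) := by rw [h_offset, mul_smul, sub_smul_slope, vsub_eq_sub]
    _ = (2 - t) • g a + t • g b := by module

theorem popoviciu_convexOn_of_mul_nonneg (hg : ConvexOn 𝕜 s g) {x y z m : 𝕜} (hx : x ∈ s)
    (hy : y ∈ s) (hz : z ∈ s) (hms : m ∈ s) (hm : x + y + z = 3 * m)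
    (hxy : 0 ≤ (x - m) * (y - m)) :
    2 • (g ((x + y) / 2) + g ((y + z) / 2) + g ((z + x) / 2)) ≤
      g x + g y + g z + 3 • g m := by
  have h_midpoint : 2 • g ((x + y) / 2) ≤ g x + g y := by
    simpa only [midpoint_eq_smul_add, invOf_eq_inv, smul_eq_mul, inv_mul_eq_div]
      using convexOn_two_nsmul_midpoint_le hg hx hy
  have hyz : (y + z) / 2 ∈ Set.uIcc m z := add_div_two_mem_uIcc_of_mul_nonneg hm hxy
  have hzx : (z + x) / 2 ∈ Set.uIcc m z := by
    rw [add_comm z x]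
    rw [add_comm x y] at hm
    rw [mul_comm] at hxy
    exact add_div_two_mem_uIcc_of_mul_nonneg hm hxy
  have h_chord : g ((y + z) / 2) + g ((z + x) / 2) ≤
      (2 - 1 / 2 : 𝕜) • g m + (1 / 2 : 𝕜) • g z :=
    convexOn_add_le_of_mem_uIcc hg hms hz hyz hzx (by linear_combination hm / 2)
  calc 2 • (g ((x + y) / 2) + g ((y + z) / 2) + g ((z + x) / 2))
    _ = 2 • g ((x + y) / 2) + 2 • (g ((y + z) / 2) + g ((z + x) / 2)) := by module
    _ ≤ (g x + g y) + 2 • ((2 - 1 / 2 : 𝕜) • g m + (1 / 2 : 𝕜) • g z) :=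
      add_le_add h_midpoint (nsmul_le_nsmul_right h_chord 2)
    _ = g x + g y + g z + 3 • g m := by module

theorem popoviciu_convexOn (hg : ConvexOn 𝕜 s g) {x y z : 𝕜} (hx : x ∈ s) (hy : y ∈ s)
    (hz : z ∈ s) :
    2 • (g ((x + y) / 2) + g ((y + z) / 2) + g ((z + x) / 2)) ≤
      g x + g y + g z + 3 • g ((x + y + z) / 3) := by
  have hms : (x + y + z) / 3 ∈ s := by
    simpa only [smul_eq_mul, inv_mul_eq_div] using inv_three_smul_add_mem_of_convex hg.1 hx hy hz
  have hm : x + y + z = 3 * ((x + y + z) / 3) := by ring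
  generalize (x + y + z) / 3 = m at hms hm ⊢
  rcases mul_nonneg_of_three (x - m) (y - m) (z - m) with hxy | hyz | hzx
  · exact popoviciu_convexOn_of_mul_nonneg hg hx hy hz hms hm hxy
  · have h := popoviciu_convexOn_of_mul_nonneg hg hy hz hx hms (by linear_combination hm) hyz
    convert h using 1 <;> abel
  · have h := popoviciu_convexOn_of_mul_nonneg hg hz hx hy hms (by linear_combination hm) hzx
    convert h using 1 <;> abel

theorem popoviciu_strongly_convex_general {C : 𝕜} {f : 𝕜 → 𝕜}
    (hf : ConvexOn 𝕜 s fun x ↦ f x - (C / 2) * x ^ 2) {x y z : 𝕜} (hx : x ∈ s) (hy : y ∈ s)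
    (hz : z ∈ s) :
    (C / 36) * ((x - y) ^ 2 + (y - z) ^ 2 + (z - x) ^ 2) ≤
      (f x + f y + f z) / 3 + f ((x + y + z) / 3) -
        (2 / 3) * (f ((x + y) / 2) + f ((y + z) / 2) + f ((z + x) / 2)) := by
  have h := popoviciu_convexOn hf hx hy hz
  simp only [nsmul_eq_mul, Nat.cast_ofNat] at h
  linear_combination (1 / 3) * h

end LinearOrderedField

/-- Popoviciu's inequality for strongly convex functions with modulus `C > 0`. -/
theorem popoviciu_strongly_convex (a b C : ℝ) (hC : 0 < C) (f : ℝ → ℝ)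
    (hf : ConvexOn ℝ (Set.Icc a b) (fun x => f x - (C / 2) * x ^ 2)) :
    ∀ x ∈ Set.Icc a b, ∀ y ∈ Set.Icc a b, ∀ z ∈ Set.Icc a b,
      (f x + f y + f z) / 3 + f ((x + y + z) / 3) -
          (2 / 3) * (f ((x + y) / 2) + f ((y + z) / 2) + f ((z + x) / 2)) ≥
        (C / 36) * ((x - y) ^ 2 + (y - z) ^ 2 + (z - x) ^ 2) :=
  fun _ hx _ hy _ hz ↦ popoviciu_strongly_convex_general hf hx hy hz
end

section
/- Aczél's lemma (increasing case): let φ be a continuous strictly monotone function on an interval I ⊆ ℝ, ψ a continuous strictly increasing function on an interval J ⊆ ℝ, and f : I → J a continuous function. Then f satisfies f(φ⁻¹((φ(x)+φ(y))/2)) ≤ ψ⁻¹((ψ(f(x))+ψ(f(y)))/2) for all x, y ∈ I if and only if the function ψ ∘ f ∘ φ⁻¹ is convex on φ(I) in the usual sense (and the analogous equivalence holds with ≥ and concavity). -/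
/-!
Continuity upgrades midpoint convexity of `ψ ∘ f ∘ φ⁻¹` to convexity: along a chord, the parameters
at which the convexity inequality holds form a closed set that contains the endpoints and is stable
under midpoints, and such a set has no gaps, since a gap would contain the midpoint of its ends.
Midpoint convexity of `ψ ∘ f ∘ φ⁻¹` at `φ x`, `φ y` is the inequality between the means at `x`, `y`
after applying the increasing function `ψ`. Reversing the orders on the codomains of `f` and `ψ`
turns the convex case into the concave one.
-/

open Set AffineMap

/-- The quasi-arithmetic mean `M_φ` of two points. The inverse `φinv` is a separate argument, an
arbitrary function required to invert `φ` only on the domain of interest, and `φ` may take values in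
a real vector space. -/
noncomputable def quasiArithMean {α E : Type*} [AddCommGroup E] [Module ℝ E]
    (φ : α → E) (φinv : E → α) (x y : α) : α :=
  φinv (midpoint ℝ (φ x) (φ y))

lemma quasiArithMean_eq_add_div_two {α : Type*} (φ : α → ℝ) (φinv : ℝ → α) (x y : α) :
    quasiArithMean φ φinv x y = φinv ((φ x + φ y) / 2) := by
  rw [quasiArithMean, midpoint_eq_smul_add, smul_eq_mul, invOf_eq_inv, inv_mul_eq_div]

lemma Icc_subset_of_isClosed_of_midpoint_mem {s : Set ℝ} {a b : ℝ} (hs : IsClosed s)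
    (hmid : ∀ x ∈ s, ∀ y ∈ s, midpoint ℝ x y ∈ s) (ha : a ∈ s) (hb : b ∈ s) : Icc a b ⊆ s := by
  intro t ht
  by_contra hts
  obtain ⟨l, ⟨hls, hlt⟩, hl⟩ := (isCompact_Icc (a := a) (b := t)).inter_left hs
    |>.exists_isGreatest ⟨a, ha, left_mem_Icc.2 ht.1⟩
  obtain ⟨r, ⟨hrs, hrt⟩, hr⟩ := (isCompact_Icc (a := t) (b := b)).inter_left hs
    |>.exists_isLeast ⟨b, hb, right_mem_Icc.2 ht.2⟩
  have hlr : l < r := (hlt.2.lt_of_ne (ne_of_mem_of_not_mem hls hts)).trans_le hrt.1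
  have hms := hmid l hls r hrs
  rcases le_total (midpoint ℝ l r) t with hmt | htm
  · have hml := hl ⟨hms, hlt.1.trans (left_le_midpoint.2 hlr.le), hmt⟩
    exact hlr.not_ge (midpoint_le_left.1 hml)
  · have hrm := hr ⟨hms, htm, (midpoint_le_right.2 hlr.le).trans hrt.2⟩
    exact hlr.not_ge (right_le_midpoint.1 hrm)

section MidpointConvex

variable {E F : Type*} [AddCommGroup E] [Module ℝ E]
  [TopologicalSpace E] [IsTopologicalAddGroup E] [ContinuousSMul ℝ E]
  [AddCommGroup F] [PartialOrder F] [IsOrderedAddMonoid F] [Module ℝ F] [IsStrictOrderedModule ℝ F]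
  [TopologicalSpace F] [IsTopologicalAddGroup F] [ContinuousSMul ℝ F] [OrderClosedTopology F]
  {S : Set E} {g : E → F}

lemma convexOn_of_map_midpoint_le (hS : Convex ℝ S) (hg : ContinuousOn g S)
    (hmid : ∀ x ∈ S, ∀ y ∈ S, g (midpoint ℝ x y) ≤ midpoint ℝ (g x) (g y)) :
    ConvexOn ℝ S g := by
  refine ⟨hS, fun x hx y hy a b ha hb hab => ?_⟩
  have hline : MapsTo (lineMap x y) (Icc (0 : ℝ) 1) S := fun t ht => hS.lineMap_mem hx hy ht
  let K : Set ℝ := {t ∈ Icc 0 1 | g (lineMap x y t) ≤ lineMap (g x) (g y) t}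
  have hK : IsClosed K :=
    isClosed_Icc.isClosed_le (hg.comp lineMap_continuous.continuousOn hline)
      lineMap_continuous.continuousOn
  have hKmid : ∀ s ∈ K, ∀ t ∈ K, midpoint ℝ s t ∈ K := fun s hs t ht => by
    refine ⟨(convex_Icc 0 1).midpoint_mem hs.1 ht.1, ?_⟩
    rw [map_midpoint, map_midpoint]
    exact (hmid _ (hline hs.1) _ (hline ht.1)).trans (midpoint_le_midpoint hs.2 ht.2)
  have hbK : b ∈ K :=
    Icc_subset_of_isClosed_of_midpoint_mem (a := 0) (b := 1) hK hKmid (by simp [K]) (by simp [K])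
      ⟨hb, by linarith⟩
  simpa only [lineMap_apply_module, ← eq_sub_of_add_eq hab] using hbK.2

lemma convexOn_iff_map_midpoint_le (hS : Convex ℝ S) (hg : ContinuousOn g S) :
    ConvexOn ℝ S g ↔ ∀ x ∈ S, ∀ y ∈ S, g (midpoint ℝ x y) ≤ midpoint ℝ (g x) (g y) := by
  refine ⟨fun h x hx y hy => ?_, convexOn_of_map_midpoint_le hS hg⟩
  have hhalf : 0 ≤ ⅟ (2 : ℝ) := by norm_num
  simpa only [midpoint_eq_smul_add, smul_add] using
    h.2 hx hy hhalf hhalf invOf_two_add_invOf_two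

end MidpointConvex

section LeftInverse

variable {α β : Type*} [LinearOrder α] [TopologicalSpace α] [OrderTopology α]
  [LinearOrder β] [TopologicalSpace β] [OrderTopology β] {I : Set α} {φ : α → β} {φinv : β → α}

lemma continuousOn_leftInvOn_of_strictMonoOn (hφ : StrictMonoOn φ I) (hI : I.OrdConnected)
    (hφI : (φ '' I).OrdConnected) (hinv : LeftInvOn φinv φ I) : ContinuousOn φinv (φ '' I) := by
  have hemb : Topology.IsEmbedding (I.domRestrict φ) :=
    hφ.domRestrict.isEmbedding_of_ordConnected (by rwa [range_domRestrict])
  rw [← range_domRestrict φ I, ← image_univ, hemb.isInducing.continuousOn_image_iff,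
    continuousOn_univ]
  exact continuous_subtype_val.congr fun x => (hinv x.2).symm

lemma continuousOn_leftInvOn_of_strictAntiOn (hφ : StrictAntiOn φ I) (hI : I.OrdConnected)
    (hφI : (φ '' I).OrdConnected) (hinv : LeftInvOn φinv φ I) : ContinuousOn φinv (φ '' I) :=
  continuousOn_leftInvOn_of_strictMonoOn (β := βᵒᵈ) hφ.dual_right hI hφI.dual hinv

end LeftInverse

section QuasiArithMean

variable {α β E F : Type*} [LinearOrder β] [AddCommGroup E] [Module ℝ E]
  [AddCommGroup F] [PartialOrder F] [Module ℝ F]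
  {I : Set α} {J : Set β} {φ : α → E} {ψ : β → F} {f : α → β} {φinv : E → α} {ψinv : F → β}

lemma le_quasiArithMean_iff (hψ : StrictMonoOn ψ J) (hψJ : Convex ℝ (ψ '' J))
    (hψinv : LeftInvOn ψinv ψ J) {u v w : β} (hu : u ∈ J) (hv : v ∈ J) (hw : w ∈ J) :
    u ≤ quasiArithMean ψ ψinv v w ↔ ψ u ≤ midpoint ℝ (ψ v) (ψ w) := by
  obtain ⟨m, hm, hmid⟩ := hψJ.midpoint_mem (mem_image_of_mem ψ hv) (mem_image_of_mem ψ hw)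
  rw [quasiArithMean, ← hmid, hψinv hm, hψ.le_iff_le hu hm]

variable [TopologicalSpace E] [IsTopologicalAddGroup E] [ContinuousSMul ℝ E]
  [IsOrderedAddMonoid F] [IsStrictOrderedModule ℝ F]
  [TopologicalSpace F] [IsTopologicalAddGroup F] [ContinuousSMul ℝ F] [OrderClosedTopology F]

lemma map_quasiArithMean_le_iff_convexOn (hφI : Convex ℝ (φ '' I)) (hψJ : Convex ℝ (ψ '' J))
    (hψ : StrictMonoOn ψ J) (hf : MapsTo f I J) (hφinv : LeftInvOn φinv φ I)
    (hψinv : LeftInvOn ψinv ψ J) (hg : ContinuousOn (ψ ∘ f ∘ φinv) (φ '' I)) :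
    (∀ x ∈ I, ∀ y ∈ I,
        f (quasiArithMean φ φinv x y) ≤ quasiArithMean ψ ψinv (f x) (f y)) ↔
      ConvexOn ℝ (φ '' I) (ψ ∘ f ∘ φinv) := by
  rw [convexOn_iff_map_midpoint_le hφI hg]
  simp only [forall_mem_image]
  refine forall₄_congr fun x hx y hy => ?_
  have hmean : quasiArithMean φ φinv x y ∈ I :=
    hφinv.mapsTo (surjOn_image φ I)
      (hφI.midpoint_mem (mem_image_of_mem φ hx) (mem_image_of_mem φ hy))
  rw [le_quasiArithMean_iff hψ hψJ hψinv (hf hmean) (hf hx) (hf hy)]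
  simp only [quasiArithMean, Function.comp_apply, hφinv hx, hφinv hy]

theorem aczel_lemma_increasing_general (hφI : Convex ℝ (φ '' I)) (hψJ : Convex ℝ (ψ '' J))
    (hψ : StrictMonoOn ψ J) (hf : MapsTo f I J) (hφinv : LeftInvOn φinv φ I)
    (hψinv : LeftInvOn ψinv ψ J) (hg : ContinuousOn (ψ ∘ f ∘ φinv) (φ '' I)) :
    ((∀ x ∈ I, ∀ y ∈ I,
        f (quasiArithMean φ φinv x y) ≤ quasiArithMean ψ ψinv (f x) (f y)) ↔
      ConvexOn ℝ (φ '' I) (ψ ∘ f ∘ φinv)) ∧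
    ((∀ x ∈ I, ∀ y ∈ I,
        f (quasiArithMean φ φinv x y) ≥ quasiArithMean ψ ψinv (f x) (f y)) ↔
      ConcaveOn ℝ (φ '' I) (ψ ∘ f ∘ φinv)) :=
  ⟨map_quasiArithMean_le_iff_convexOn hφI hψJ hψ hf hφinv hψinv hg,
    map_quasiArithMean_le_iff_convexOn (β := βᵒᵈ) (F := Fᵒᵈ) hφI hψJ hψ.dual hf hφinv hψinv hg⟩

end QuasiArithMean

/-- Aczél's lemma (increasing case): for `φ` continuous and strictly monotone on the
interval `I`, `ψ` continuous and strictly increasing on the interval `J`, and a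
continuous `f : I → J`, the function `f` is `(M_φ, M_ψ)`-convex (resp. concave) iff
`ψ ∘ f ∘ φ⁻¹` is convex (resp. concave) on `φ(I)`. -/
theorem aczel_lemma_increasing (I J : Set ℝ) (hI : Convex ℝ I) (hJ : Convex ℝ J)
    (φ ψ f φinv ψinv : ℝ → ℝ)
    (hφc : ContinuousOn φ I) (hφm : StrictMonoOn φ I ∨ StrictAntiOn φ I)
    (hψc : ContinuousOn ψ J) (hψm : StrictMonoOn ψ J)
    (hfc : ContinuousOn f I) (hfm : Set.MapsTo f I J)
    (hφinv : ∀ x ∈ I, φinv (φ x) = x) (hφinvm : Set.MapsTo φinv (φ '' I) I)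
    (hψinv : ∀ y ∈ J, ψinv (ψ y) = y) (hψinvm : Set.MapsTo ψinv (ψ '' J) J) :
    ((∀ x ∈ I, ∀ y ∈ I,
        f (φinv ((φ x + φ y) / 2)) ≤ ψinv ((ψ (f x) + ψ (f y)) / 2)) ↔
      ConvexOn ℝ (φ '' I) (ψ ∘ f ∘ φinv)) ∧
    ((∀ x ∈ I, ∀ y ∈ I,
        f (φinv ((φ x + φ y) / 2)) ≥ ψinv ((ψ (f x) + ψ (f y)) / 2)) ↔
      ConcaveOn ℝ (φ '' I) (ψ ∘ f ∘ φinv)) := by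
  have hφI : Convex ℝ (φ '' I) := (hI.isPreconnected.image φ hφc).ordConnected.convex
  have hψJ : Convex ℝ (ψ '' J) := (hJ.isPreconnected.image ψ hψc).ordConnected.convex
  have hφinvc : ContinuousOn φinv (φ '' I) := hφm.elim
    (continuousOn_leftInvOn_of_strictMonoOn · hI.ordConnected hφI.ordConnected hφinv)
    (continuousOn_leftInvOn_of_strictAntiOn · hI.ordConnected hφI.ordConnected hφinv)
  have hg : ContinuousOn (ψ ∘ f ∘ φinv) (φ '' I) :=
    hψc.comp (hfc.comp hφinvc hφinvm) (hfm.comp hφinvm)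
  simpa only [quasiArithMean_eq_add_div_two] using
    aczel_lemma_increasing_general hφI hψJ hψm hfm hφinv hψinv hg
end

section
/- Aczél's lemma (decreasing case): let φ be a continuous strictly monotone function on an interval I ⊆ ℝ, ψ a continuous strictly decreasing function on an interval J ⊆ ℝ, and f : I → J a continuous function. Then f satisfies f(φ⁻¹((φ(x)+φ(y))/2)) ≤ ψ⁻¹((ψ(f(x))+ψ(f(y)))/2) for all x, y ∈ I if and only if the function ψ ∘ f ∘ φ⁻¹ is concave on φ(I) in the usual sense (and the analogous equivalence holds with ≥ and convexity). -/
/-!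
Applying the decreasing function `ψ` to the mean inequality reverses it and, in the variables
`φ x`, `φ y`, turns it into midpoint concavity of `ψ ∘ f ∘ φ⁻¹` on `φ(I)`. This function is
continuous because the inverse of a strictly monotone function on an interval is, so midpoint
concavity is concavity by Jensen's theorem: along a segment, the parameters at which the chord
inequality holds form a closed midpoint-stable set containing both endpoints, and a gap in such a
set would contain the midpoint of its two ends.
-/

open Set AffineMap

section ClosedDenselyOrdered

variable {α : Type*} [ConditionallyCompleteLinearOrder α] [TopologicalSpace α] [OrderTopology α]

theorem ordConnected_of_isClosed_of_denselyOrdered {s : Set α} (hs : IsClosed s)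
    [DenselyOrdered s] : s.OrdConnected := by
  refine ordConnected_iff.2 fun a ha b hb _ c hc => by_contra fun hcs => ?_
  obtain ⟨l, hl⟩ : ∃ l, IsGreatest (s ∩ Iic c) l :=
    ⟨_, (hs.inter isClosed_Iic).isGreatest_csSup ⟨a, ha, hc.1⟩
      (bddAbove_Iic.mono inter_subset_right)⟩
  obtain ⟨r, hr⟩ : ∃ r, IsLeast (s ∩ Ici c) r :=
    ⟨_, (hs.inter isClosed_Ici).isLeast_csInf ⟨b, hb, hc.2⟩
      (bddBelow_Ici.mono inter_subset_right)⟩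
  have hlc : l < c := lt_of_le_of_ne hl.1.2 fun h => hcs (h ▸ hl.1.1)
  have hlr : (⟨l, hl.1.1⟩ : s) < ⟨r, hr.1.1⟩ := hlc.trans_le hr.1.2
  obtain ⟨⟨m, hm⟩, hlm, hmr⟩ := exists_between hlr
  rcases le_total m c with hmc | hcm
  · exact (hl.2 ⟨hm, hmc⟩).not_gt hlm
  · exact (hr.2 ⟨hm, hcm⟩).not_gt hmr

end ClosedDenselyOrdered

theorem real_midpoint_eq_add_div_two (x y : ℝ) : midpoint ℝ x y = (x + y) / 2 := by
  rw [midpoint_eq_smul_add, smul_eq_mul, invOf_eq_inv, inv_mul_eq_div]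

theorem ordConnected_of_isClosed_of_midpoint_mem {s : Set ℝ} (hs : IsClosed s)
    (hmid : ∀ x ∈ s, ∀ y ∈ s, midpoint ℝ x y ∈ s) : s.OrdConnected := by
  have : DenselyOrdered s := by
    refine ⟨fun x y (hxy : (x : ℝ) < y) => ?_⟩
    have hm : ((x : ℝ) + y) / 2 ∈ s := by
      simpa only [real_midpoint_eq_add_div_two] using hmid x x.2 y y.2
    exact ⟨⟨_, hm⟩, Subtype.coe_lt_coe.1 (left_lt_add_div_two.2 hxy),
      Subtype.coe_lt_coe.1 (add_div_two_lt_right.2 hxy)⟩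
  exact ordConnected_of_isClosed_of_denselyOrdered hs

section MidpointConvex

variable {E β : Type*}
  [AddCommGroup E] [Module ℝ E] [TopologicalSpace E] [IsTopologicalAddGroup E] [ContinuousSMul ℝ E]
  [AddCommGroup β] [PartialOrder β] [IsOrderedAddMonoid β] [Module ℝ β] [IsStrictOrderedModule ℝ β]
  [TopologicalSpace β] [OrderClosedTopology β] [IsTopologicalAddGroup β] [ContinuousSMul ℝ β]
  {s : Set E} {g : E → β}

theorem convexOn_of_continuousOn_of_midpoint_le (hs : Convex ℝ s) (hg : ContinuousOn g s)
    (hmid : ∀ x ∈ s, ∀ y ∈ s, g (midpoint ℝ x y) ≤ midpoint ℝ (g x) (g y)) :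
    ConvexOn ℝ s g := by
  refine ⟨hs, fun x hx y hy a b ha hb hab => ?_⟩
  let T : Set ℝ := {t ∈ Icc 0 1 | g (lineMap x y t) ≤ lineMap (g x) (g y) t}
  have hmem : ∀ t ∈ Icc (0 : ℝ) 1, lineMap x y t ∈ s := fun t ht => hs.lineMap_mem hx hy ht
  have hclosed : IsClosed T := isClosed_Icc.isClosed_le
    (hg.comp lineMap_continuous.continuousOn hmem) lineMap_continuous.continuousOn
  have hT : ∀ t ∈ T, ∀ u ∈ T, midpoint ℝ t u ∈ T := by
    intro t ht u hu
    refine ⟨(convex_Icc 0 1).midpoint_mem ht.1 hu.1, ?_⟩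
    calc g (lineMap x y (midpoint ℝ t u))
        = g (midpoint ℝ (lineMap x y t) (lineMap x y u)) := by rw [map_midpoint]
      _ ≤ midpoint ℝ (g (lineMap x y t)) (g (lineMap x y u)) :=
        hmid _ (hmem t ht.1) _ (hmem u hu.1)
      _ ≤ midpoint ℝ (lineMap (g x) (g y) t) (lineMap (g x) (g y) u) :=
        midpoint_le_midpoint ht.2 hu.2
      _ = lineMap (g x) (g y) (midpoint ℝ t u) := by rw [map_midpoint]
  have hbT : b ∈ T :=
    (ordConnected_of_isClosed_of_midpoint_mem hclosed hT).out
      (show (0 : ℝ) ∈ T by simp [T]) (show (1 : ℝ) ∈ T by simp [T]) ⟨hb, by linarith⟩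
  obtain rfl : a = 1 - b := eq_sub_of_add_eq hab
  simpa only [lineMap_apply_module] using hbT.2

theorem convexOn_iff_midpoint_le (hs : Convex ℝ s) (hg : ContinuousOn g s) :
    ConvexOn ℝ s g ↔ ∀ x ∈ s, ∀ y ∈ s, g (midpoint ℝ x y) ≤ midpoint ℝ (g x) (g y) := by
  refine ⟨fun h x hx y hy => ?_, convexOn_of_continuousOn_of_midpoint_le hs hg⟩
  simpa only [midpoint_eq_smul_add, smul_add] using
    h.2 hx hy (show (0 : ℝ) ≤ ⅟2 by norm_num) (show (0 : ℝ) ≤ ⅟2 by norm_num) (by norm_num)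

theorem concaveOn_iff_le_midpoint (hs : Convex ℝ s) (hg : ContinuousOn g s) :
    ConcaveOn ℝ s g ↔ ∀ x ∈ s, ∀ y ∈ s, midpoint ℝ (g x) (g y) ≤ g (midpoint ℝ x y) :=
  convexOn_iff_midpoint_le (β := βᵒᵈ) hs hg

end MidpointConvex

theorem convex_image_of_continuousOn {E : Type*} [AddCommGroup E] [Module ℝ E] [TopologicalSpace E]
    [ContinuousAdd E] [ContinuousSMul ℝ E] {s : Set E} {g : E → ℝ} (hs : Convex ℝ s)
    (hg : ContinuousOn g s) : Convex ℝ (g '' s) :=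
  Real.convex_iff_isPreconnected.2 (hs.isPreconnected.image g hg)

section LeftInverse

variable {α β : Type*} [LinearOrder α] {s : Set α} {g : α → β} {ginv : β → α}

section Continuity

variable [TopologicalSpace α] [OrderTopology α]
  [LinearOrder β] [TopologicalSpace β] [OrderClosedTopology β]

theorem continuousOn_leftInvOn_of_strictMonoOn_s5 [s.OrdConnected] (hg : StrictMonoOn g s)
    (hinv : LeftInvOn ginv g s) : ContinuousOn ginv (g '' s) := by
  have hsymm : Continuous (hg.orderIso g s).symm := OrderTopology.continuous_iff.2 fun a =>
    ⟨by simpa only [OrderIso.preimage_Ioi] using isOpen_Ioi,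
      by simpa only [OrderIso.preimage_Iio] using isOpen_Iio⟩
  rw [continuousOn_iff_continuous_domRestrict]
  refine (continuous_subtype_val.comp hsymm).congr fun y => ?_
  obtain ⟨x, rfl⟩ := (hg.orderIso g s).surjective y
  rw [Function.comp_apply, OrderIso.symm_apply_apply]
  exact (hinv x.2).symm

theorem continuousOn_leftInvOn_of_strictAntiOn_s5 [s.OrdConnected] (hg : StrictAntiOn g s)
    (hinv : LeftInvOn ginv g s) : ContinuousOn ginv (g '' s) :=
  continuousOn_leftInvOn_of_strictMonoOn_s5 (β := βᵒᵈ) hg.dual_right hinv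

end Continuity

section Order

variable [Preorder β]

theorem le_leftInvOn_iff_of_strictAntiOn (hg : StrictAntiOn g s) (hinv : LeftInvOn ginv g s)
    {x : α} (hx : x ∈ s) {y : β} (hy : y ∈ g '' s) : x ≤ ginv y ↔ y ≤ g x := by
  obtain ⟨z, hz, rfl⟩ := hy
  rw [hinv hz, hg.le_iff_ge hz hx]

theorem leftInvOn_le_iff_of_strictAntiOn (hg : StrictAntiOn g s) (hinv : LeftInvOn ginv g s)
    {x : α} (hx : x ∈ s) {y : β} (hy : y ∈ g '' s) : ginv y ≤ x ↔ g x ≤ y := by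
  obtain ⟨z, hz, rfl⟩ := hy
  rw [hinv hz, hg.le_iff_ge hx hz]

end Order

end LeftInverse

/-- Aczél's lemma (decreasing case): for `φ` continuous and strictly monotone on the
interval `I`, `ψ` continuous and strictly decreasing on the interval `J`, and a
continuous `f : I → J`, the function `f` is `(M_φ, M_ψ)`-convex (resp. concave) iff
`ψ ∘ f ∘ φ⁻¹` is concave (resp. convex) on `φ(I)`. -/
theorem aczel_lemma_decreasing (I J : Set ℝ) (hI : Convex ℝ I) (hJ : Convex ℝ J)
    (φ ψ f φinv ψinv : ℝ → ℝ)
    (hφc : ContinuousOn φ I) (hφm : StrictMonoOn φ I ∨ StrictAntiOn φ I)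
    (hψc : ContinuousOn ψ J) (hψm : StrictAntiOn ψ J)
    (hfc : ContinuousOn f I) (hfm : Set.MapsTo f I J)
    (hφinv : ∀ x ∈ I, φinv (φ x) = x) (hφinvm : Set.MapsTo φinv (φ '' I) I)
    (hψinv : ∀ y ∈ J, ψinv (ψ y) = y) (hψinvm : Set.MapsTo ψinv (ψ '' J) J) :
    ((∀ x ∈ I, ∀ y ∈ I,
        f (φinv ((φ x + φ y) / 2)) ≤ ψinv ((ψ (f x) + ψ (f y)) / 2)) ↔
      ConcaveOn ℝ (φ '' I) (ψ ∘ f ∘ φinv)) ∧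
    ((∀ x ∈ I, ∀ y ∈ I,
        f (φinv ((φ x + φ y) / 2)) ≥ ψinv ((ψ (f x) + ψ (f y)) / 2)) ↔
      ConvexOn ℝ (φ '' I) (ψ ∘ f ∘ φinv)) := by
  have hs : Convex ℝ (φ '' I) := convex_image_of_continuousOn hI hφc
  have hφinvc : ContinuousOn φinv (φ '' I) :=
    have := hI.ordConnected
    hφm.elim (continuousOn_leftInvOn_of_strictMonoOn_s5 · hφinv)
      (continuousOn_leftInvOn_of_strictAntiOn_s5 · hφinv)
  have hc : ContinuousOn (ψ ∘ f ∘ φinv) (φ '' I) :=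
    hψc.comp (hfc.comp hφinvc hφinvm) (hfm.comp hφinvm)
  have hleft : ∀ x ∈ I, ∀ y ∈ I, f (φinv (midpoint ℝ (φ x) (φ y))) ∈ J := fun x hx y hy =>
    hfm (hφinvm (hs.midpoint_mem (mem_image_of_mem φ hx) (mem_image_of_mem φ hy)))
  have hright : ∀ x ∈ I, ∀ y ∈ I, midpoint ℝ (ψ (f x)) (ψ (f y)) ∈ ψ '' J := fun x hx y hy =>
    (convex_image_of_continuousOn hJ hψc).midpoint_mem
      (mem_image_of_mem ψ (hfm hx)) (mem_image_of_mem ψ (hfm hy))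
  rw [concaveOn_iff_le_midpoint hs hc, convexOn_iff_midpoint_le hs hc]
  simp only [forall_mem_image, Function.comp_apply, ge_iff_le, ← real_midpoint_eq_add_div_two]
  constructor <;> refine forall₂_congr fun x hx => forall₂_congr fun y hy => ?_ <;>
    rw [hφinv x hx, hφinv y hy]
  · exact le_leftInvOn_iff_of_strictAntiOn hψm hψinv (hleft x hx y hy) (hright x hx y hy)
  · exact leftInvOn_le_iff_of_strictAntiOn hψm hψinv (hleft x hx y hy) (hright x hx y hy)
end

section
/- Jensen's inequality for (M_φ, M_ψ)-convex functions: if φ is continuous and strictly monotone on an interval I ⊆ ℝ, ψ is continuous and strictly monotone on an interval J ⊆ ℝ, and f : I → J is (M_φ, M_ψ)-convex, then for all n ≥ 1, points x₁,…,xₙ ∈ I and weights λ₁,…,λₙ ∈ [0,1] with λ₁+⋯+λₙ = 1, one has f(φ⁻¹(Σₖ λₖ φ(xₖ))) ≤ ψ⁻¹(Σₖ λₖ ψ(f(xₖ))). -/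
/-!
`f` is `(M_φ, M_ψ)`-convex exactly when `ψ ∘ f ∘ φ⁻¹` (for increasing `ψ`) or its negative (for
decreasing `ψ`) is midpoint convex on the interval `φ(I)`. A continuous midpoint convex function is
convex: subtracting a chord leaves a midpoint convex function vanishing at both endpoints, and its
maximum over the chord is at most half of itself, hence not positive. The claim is then the ordinary
finite Jensen inequality for `± ψ ∘ f ∘ φ⁻¹`.
-/

open Set

theorem midpoint_eq_add_div_two (a b : ℝ) : midpoint ℝ a b = (a + b) / 2 := by
  rw [midpoint_eq_smul_add, smul_eq_mul, invOf_eq_inv, inv_mul_eq_div]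

section MidpointConvex

theorem nonpos_on_unitInterval_of_midpoint_le {h : ℝ → ℝ} (hcont : ContinuousOn h (Icc 0 1))
    (h_zero : h 0 ≤ 0) (h_one : h 1 ≤ 0)
    (hmid : ∀ t ∈ Icc (0 : ℝ) 1, ∀ u ∈ Icc (0 : ℝ) 1,
      h (midpoint ℝ t u) ≤ midpoint ℝ (h t) (h u)) :
    ∀ t ∈ Icc (0 : ℝ) 1, h t ≤ 0 := by
  simp only [midpoint_eq_add_div_two] at hmid
  obtain ⟨m, ⟨hm_nonneg, hm_le_one⟩, hmax⟩ :=
    isCompact_Icc.exists_isMaxOn (nonempty_Icc.2 zero_le_one) hcont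
  have hle : ∀ t ∈ Icc (0 : ℝ) 1, h t ≤ h m := fun t ht => hmax ht
  suffices hm : h m ≤ 0 from fun t ht => (hle t ht).trans hm
  -- `m` is the midpoint of `u` and an endpoint, so `h m ≤ h u / 2 ≤ h m / 2`.
  rcases le_total m (1 / 2) with hm_half | hm_half
  · have hu : 2 * m ∈ Icc (0 : ℝ) 1 := ⟨by linarith, by linarith⟩
    have hm_le := hmid 0 (by simp) (2 * m) hu
    rw [show (0 + 2 * m) / 2 = m by ring] at hm_le
    linarith [hle _ hu]
  · have hu : 2 * m - 1 ∈ Icc (0 : ℝ) 1 := ⟨by linarith, by linarith⟩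
    have hm_le := hmid 1 (by simp) (2 * m - 1) hu
    rw [show (1 + (2 * m - 1)) / 2 = m by ring] at hm_le
    linarith [hle _ hu]

variable {E : Type*} [AddCommGroup E] [Module ℝ E] [TopologicalSpace E] [ContinuousAdd E]
  [ContinuousSMul ℝ E] {s : Set E}

theorem convexOn_of_midpoint_le {g : E → ℝ} (hs : Convex ℝ s) (hg : ContinuousOn g s)
    (hmid : ∀ x ∈ s, ∀ y ∈ s, g (midpoint ℝ x y) ≤ midpoint ℝ (g x) (g y)) :
    ConvexOn ℝ s g := by
  refine ⟨hs, fun x hx y hy a b ha hb hab => ?_⟩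
  let p : ℝ →ᵃ[ℝ] E := AffineMap.lineMap x y
  let chord : ℝ →ᵃ[ℝ] ℝ := AffineMap.lineMap (g x) (g y)
  have hp : MapsTo p (Icc 0 1) s := fun t ht => hs.lineMap_mem hx hy ht
  have hp_cont : Continuous p := by
    rw [show ⇑p = fun t => (1 - t) • x + t • y from funext (AffineMap.lineMap_apply_module x y)]
    fun_prop
  have hcont : ContinuousOn (fun t => g (p t) - chord t) (Icc 0 1) :=
    (hg.comp hp_cont.continuousOn hp).sub AffineMap.lineMap_continuous.continuousOn
  have hle := nonpos_on_unitInterval_of_midpoint_le hcont (by simp [p, chord])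
    (by simp [p, chord]) fun t ht u hu => by
      have hg_le := hmid _ (hp ht) _ (hp hu)
      rw [p.map_midpoint, chord.map_midpoint]
      simp only [midpoint_eq_add_div_two] at hg_le ⊢
      linarith
  obtain rfl : a = 1 - b := by linarith
  have hgb := hle b ⟨hb, by linarith⟩
  simpa only [sub_nonpos, p, chord, AffineMap.lineMap_apply_module] using hgb

end MidpointConvex

section LeftInverse

variable {α β : Type*} [LinearOrder α] {s : Set α} {φ : α → β} {φinv : β → α}

theorem le_apply_iff_of_leftInvOn [Preorder β] (hφ : StrictMonoOn φ s) (hφinv : LeftInvOn φinv φ s)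
    {x : α} {y : β} (hx : x ∈ s) (hy : y ∈ φ '' s) : x ≤ φinv y ↔ φ x ≤ y := by
  obtain ⟨z, hz, rfl⟩ := hy
  rw [hφinv hz, hφ.le_iff_le hx hz]

variable [TopologicalSpace α] [OrderTopology α] [LinearOrder β] [TopologicalSpace β]
  [OrderClosedTopology β]

theorem continuousOn_of_leftInvOn_of_strictMonoOn (hs : s.OrdConnected) (hφ : StrictMonoOn φ s)
    (hφinv : LeftInvOn φinv φ s) : ContinuousOn φinv (φ '' s) := by
  let e : s ≃o φ '' s := hφ.orderIso φ s
  have he_symm : Continuous e.symm := by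
    refine OrderTopology.continuous_iff.2 fun x => ⟨?_, ?_⟩
    · rw [e.symm.preimage_Ioi]
      exact isOpen_Ioi
    · rw [e.symm.preimage_Iio]
      exact isOpen_Iio
  have hφinv_eq : (φ '' s).domRestrict φinv = Subtype.val ∘ e.symm := by
    funext y
    obtain ⟨x, rfl⟩ := e.surjective y
    rw [Function.comp_apply, e.symm_apply_apply]
    exact hφinv x.2
  rw [continuousOn_iff_continuous_domRestrict, hφinv_eq]
  exact continuous_subtype_val.comp he_symm

theorem continuousOn_of_leftInvOn_of_strictAntiOn (hs : s.OrdConnected) (hφ : StrictAntiOn φ s)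
    (hφinv : LeftInvOn φinv φ s) : ContinuousOn φinv (φ '' s) :=
  continuousOn_of_leftInvOn_of_strictMonoOn (β := βᵒᵈ) hs hφ.dual_right hφinv

end LeftInverse

section Jensen

variable {ι α β E : Type*} [LinearOrder β] [AddCommGroup E] [Module ℝ E] [TopologicalSpace E]
  [ContinuousAdd E] [ContinuousSMul ℝ E] {ψ : β → ℝ} {ψinv : ℝ → β} {t : Finset ι} {w : ι → ℝ}

theorem convexOn_comp_of_midpoint_le_mean {s : Set E} {g : E → β} (hs : Convex ℝ s)
    (hcont : ContinuousOn (ψ ∘ g) s) (hψ : StrictMonoOn ψ (g '' s))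
    (hψinv : LeftInvOn ψinv ψ (g '' s))
    (hmid : ∀ x ∈ s, ∀ y ∈ s, g (midpoint ℝ x y) ≤ ψinv (midpoint ℝ (ψ (g x)) (ψ (g y)))) :
    ConvexOn ℝ s (ψ ∘ g) := by
  have h_image : Convex ℝ (ψ '' (g '' s)) := by
    rw [← image_comp]
    exact (hs.isPreconnected.image _ hcont).convex
  refine convexOn_of_midpoint_le hs hcont fun x hx y hy => ?_
  have hmem : midpoint ℝ (ψ (g x)) (ψ (g y)) ∈ ψ '' (g '' s) :=
    h_image.midpoint_mem (mem_image_of_mem ψ (mem_image_of_mem g hx))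
      (mem_image_of_mem ψ (mem_image_of_mem g hy))
  exact (le_apply_iff_of_leftInvOn hψ hψinv (mem_image_of_mem g (hs.midpoint_mem hx hy)) hmem).1
    (hmid x hx y hy)

theorem map_sum_le_quasiArithmeticMean_of_strictMonoOn {s : Set E} {g : E → β} (hs : Convex ℝ s)
    (hcont : ContinuousOn (ψ ∘ g) s) (hψ : StrictMonoOn ψ (g '' s))
    (hψinv : LeftInvOn ψinv ψ (g '' s))
    (hmid : ∀ x ∈ s, ∀ y ∈ s, g (midpoint ℝ x y) ≤ ψinv (midpoint ℝ (ψ (g x)) (ψ (g y))))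
    {x : ι → E} (hx : ∀ i ∈ t, x i ∈ s) (hw : ∀ i ∈ t, 0 ≤ w i) (hw_sum : ∑ i ∈ t, w i = 1) :
    g (∑ i ∈ t, w i • x i) ≤ ψinv (∑ i ∈ t, w i * ψ (g (x i))) := by
  have hmem : ∑ i ∈ t, w i * ψ (g (x i)) ∈ ψ '' (g '' s) := by
    rw [← image_comp]
    exact (hs.isPreconnected.image _ hcont).convex.sum_mem hw hw_sum
      fun i hi => mem_image_of_mem (ψ ∘ g) (hx i hi)
  rw [le_apply_iff_of_leftInvOn hψ hψinv (mem_image_of_mem g (hs.sum_mem hw hw_sum hx)) hmem]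
  exact (convexOn_comp_of_midpoint_le_mean hs hcont hψ hψinv hmid).map_sum_le hw hw_sum hx

theorem map_sum_le_quasiArithmeticMean {s : Set E} {g : E → β} (hs : Convex ℝ s)
    (hcont : ContinuousOn (ψ ∘ g) s) (hψ : StrictMonoOn ψ (g '' s) ∨ StrictAntiOn ψ (g '' s))
    (hψinv : LeftInvOn ψinv ψ (g '' s))
    (hmid : ∀ x ∈ s, ∀ y ∈ s, g (midpoint ℝ x y) ≤ ψinv (midpoint ℝ (ψ (g x)) (ψ (g y))))
    {x : ι → E} (hx : ∀ i ∈ t, x i ∈ s) (hw : ∀ i ∈ t, 0 ≤ w i) (hw_sum : ∑ i ∈ t, w i = 1) :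
    g (∑ i ∈ t, w i • x i) ≤ ψinv (∑ i ∈ t, w i * ψ (g (x i))) := by
  rcases hψ with hψ | hψ
  · exact map_sum_le_quasiArithmeticMean_of_strictMonoOn hs hcont hψ hψinv hmid hx hw hw_sum
  · -- `ψ` and `-ψ` generate the same mean.
    have hψinv_neg : LeftInvOn (fun z => ψinv (-z)) (-ψ) (g '' s) := fun y hy => by
      simpa using hψinv hy
    have h_neg := map_sum_le_quasiArithmeticMean_of_strictMonoOn (ψ := -ψ) hs hcont.neg hψ.neg
      hψinv_neg (fun x hx y hy => by
        simpa [midpoint_eq_add_div_two, ← neg_add_rev, neg_div, add_comm] using hmid x hx y hy)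
      hx hw hw_sum
    simpa using h_neg

theorem jensen_quasi_arithmetic_general {s : Set α} {φ : α → E} {φinv : E → α} {f : α → β}
    (hφs : Convex ℝ (φ '' s)) (hφinv : LeftInvOn φinv φ s)
    (hcont : ContinuousOn (ψ ∘ f ∘ φinv) (φ '' s))
    (hψ : StrictMonoOn ψ (f '' s) ∨ StrictAntiOn ψ (f '' s)) (hψinv : LeftInvOn ψinv ψ (f '' s))
    (hconv : ∀ x ∈ s, ∀ y ∈ s,
      f (φinv (midpoint ℝ (φ x) (φ y))) ≤ ψinv (midpoint ℝ (ψ (f x)) (ψ (f y))))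
    {x : ι → α} (hx : ∀ i ∈ t, x i ∈ s) (hw : ∀ i ∈ t, 0 ≤ w i) (hw_sum : ∑ i ∈ t, w i = 1) :
    f (φinv (∑ i ∈ t, w i • φ (x i))) ≤ ψinv (∑ i ∈ t, w i * ψ (f (x i))) := by
  have h_image : (f ∘ φinv) '' (φ '' s) = f '' s := by
    rw [image_comp, hφinv.image_image]
  have hmid : ∀ u ∈ φ '' s, ∀ v ∈ φ '' s, (f ∘ φinv) (midpoint ℝ u v) ≤
      ψinv (midpoint ℝ (ψ ((f ∘ φinv) u)) (ψ ((f ∘ φinv) v))) := by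
    rintro _ ⟨x, hx, rfl⟩ _ ⟨y, hy, rfl⟩
    simpa only [Function.comp_apply, hφinv hx, hφinv hy] using hconv x hx y hy
  calc f (φinv (∑ i ∈ t, w i • φ (x i)))
      ≤ ψinv (∑ i ∈ t, w i * ψ (f (φinv (φ (x i))))) :=
        map_sum_le_quasiArithmeticMean (g := f ∘ φinv) hφs hcont (by rwa [h_image])
          (by rwa [h_image]) hmid (fun i hi => mem_image_of_mem φ (hx i hi)) hw hw_sum
    _ = ψinv (∑ i ∈ t, w i * ψ (f (x i))) := by
        rw [Finset.sum_congr rfl fun i hi => by rw [hφinv (hx i hi)]]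

end Jensen

/-- Jensen's inequality for `(M_φ, M_ψ)`-convex functions. -/
theorem jensen_quasi_arithmetic (I J : Set ℝ) (hI : Convex ℝ I) (hJ : Convex ℝ J)
    (φ ψ f φinv ψinv : ℝ → ℝ)
    (hφc : ContinuousOn φ I) (hφm : StrictMonoOn φ I ∨ StrictAntiOn φ I)
    (hψc : ContinuousOn ψ J) (hψm : StrictMonoOn ψ J ∨ StrictAntiOn ψ J)
    (hfc : ContinuousOn f I) (hfm : Set.MapsTo f I J)
    (hφinv : ∀ x ∈ I, φinv (φ x) = x) (hφinvm : Set.MapsTo φinv (φ '' I) I)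
    (hψinv : ∀ y ∈ J, ψinv (ψ y) = y) (hψinvm : Set.MapsTo ψinv (ψ '' J) J)
    (hconv : ∀ x ∈ I, ∀ y ∈ I,
      f (φinv ((φ x + φ y) / 2)) ≤ ψinv ((ψ (f x) + ψ (f y)) / 2)) :
    ∀ n : ℕ, 1 ≤ n → ∀ x : Fin n → ℝ, ∀ w : Fin n → ℝ,
      (∀ i, x i ∈ I) → (∀ i, w i ∈ Set.Icc (0 : ℝ) 1) → ∑ i, w i = 1 →
      f (φinv (∑ i, w i * φ (x i))) ≤ ψinv (∑ i, w i * ψ (f (x i))) := by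
  intro n _ x w hx hw hw_sum
  have hφinv_cont : ContinuousOn φinv (φ '' I) :=
    hφm.elim (fun h => continuousOn_of_leftInvOn_of_strictMonoOn hI.ordConnected h hφinv)
      fun h => continuousOn_of_leftInvOn_of_strictAntiOn hI.ordConnected h hφinv
  have hψ : StrictMonoOn ψ (f '' I) ∨ StrictAntiOn ψ (f '' I) :=
    hψm.imp (fun h => h.mono hfm.image_subset) fun h => h.mono hfm.image_subset
  exact jensen_quasi_arithmetic_general (hI.isPreconnected.image φ hφc).convex hφinv
    (hψc.comp (hfc.comp hφinv_cont hφinvm) (hfm.comp hφinvm)) hψ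
    (fun y hy => hψinv y (hfm.image_subset hy))
    (by simpa only [midpoint_eq_add_div_two] using hconv)
    (fun i _ => hx i) (fun i _ => (hw i).1) hw_sum
end

section
/- Popoviciu's inequality for h-convex functions: let h : (0,1) → (0,∞) be a concave function with h(λ) + h(1−λ) ≥ 1 for all λ ∈ (0,1), let I ⊆ ℝ be an interval, and let f : I → ℝ be a nonnegative h-convex function. Then for all x, y, z ∈ I: max{h(1/2), 2·h(1/4)}·(f(x) + f(y) + f(z)) + 2·h(3/4)·f((x+y+z)/3) ≥ f((x+y)/2) + f((y+z)/2) + f((z+x)/2). -/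
/-!
Let `m` be the mean of `x, y, z`. If no point equals `m`, two of them, say `x` and `y`, lie
strictly on the same side of `m`. The midpoints of `y, z` and of `z, x` then divide the segment
from `m` to `z` in proportions `u` and `1 / 2 - u`, and the two `h`-convexity inequalities on that
segment carry the weights `h u + h (1 / 2 - u) ≤ 2 * h (1 / 4)` at `z` and
`h (1 - u) + h (1 / 2 + u) ≤ 2 * h (3 / 4)` at `m`, by concavity of `h`.

If `y = m`, this is the excluded case `u = 0`. There `h`-convexity at `m, m` gives
`1 ≤ h l + h (1 - l)` unless `f m = 0`, and concavity of `l ↦ h l + h (1 - l)` between `l → 0` and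
`l = 1 / 2` bounds the surplus coefficient of `f m`.
-/

open Set Filter Topology

theorem mul_pos_or_mul_pos_or_mul_pos {R : Type*} [CommRing R] [LinearOrder R]
    [IsStrictOrderedRing R] {a b c : R} (ha : a ≠ 0) (hb : b ≠ 0) (hc : c ≠ 0) :
    0 < a * b ∨ 0 < b * c ∨ 0 < c * a := by
  by_contra! ⟨hab, hbc, hca⟩
  have hnonpos : (a * b) * (b * c) * (c * a) ≤ 0 :=
    mul_nonpos_of_nonneg_of_nonpos (mul_nonneg_of_nonpos_of_nonpos hab hbc) hca
  have hpos : 0 < (a * b * c) ^ 2 := by positivity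
  linarith [show (a * b) * (b * c) * (c * a) = (a * b * c) ^ 2 by ring]

theorem exists_mem_Ioo_eq_mul_add_of_mul_pos {K : Type*} [Field K] [LinearOrder K]
    [IsStrictOrderedRing K] {a b : K} (hab : 0 < a * b) :
    ∃ t ∈ Ioo (0 : K) 1, b = t * (a + b) := by
  rcases pos_and_pos_or_neg_and_neg_of_mul_pos hab with ⟨ha, hb⟩ | ⟨ha, hb⟩
  · have hsum : 0 < a + b := add_pos ha hb
    exact ⟨b / (a + b), ⟨div_pos hb hsum, (div_lt_one hsum).2 (lt_add_of_pos_left b ha)⟩,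
      (div_mul_cancel₀ b hsum.ne').symm⟩
  · have hsum : a + b < 0 := add_neg ha hb
    exact ⟨b / (a + b), ⟨div_pos_of_neg_of_neg hb hsum,
      (div_lt_one_of_neg hsum).2 (add_lt_of_neg_left b ha)⟩, (div_mul_cancel₀ b hsum.ne).symm⟩

theorem add_add_div_three_mem_of_convex {K : Type*} [Field K] [LinearOrder K]
    [IsStrictOrderedRing K] {s : Set K} (hs : Convex K s) {x y z : K} (hx : x ∈ s) (hy : y ∈ s)
    (hz : z ∈ s) : (x + y + z) / 3 ∈ s := by
  have hxy : (1 / 2 : K) • x + (1 / 2 : K) • y ∈ s :=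
    hs hx hy (by positivity) (by positivity) (by norm_num)
  convert hs hxy hz (show 0 ≤ (2 / 3 : K) by positivity) (show 0 ≤ (1 / 3 : K) by positivity)
    (by norm_num) using 1
  simp only [smul_eq_mul]
  ring

theorem add_le_two_mul_of_concaveOn {E : Type*} [AddCommGroup E] [Module ℝ E] {s : Set E}
    {φ : E → ℝ} (hφ : ConcaveOn ℝ s φ) {x y c : E} (hx : x ∈ s) (hy : y ∈ s)
    (hc : x + y = (2 : ℝ) • c) : φ x + φ y ≤ 2 * φ c := by
  have hmid : (1 / 2 : ℝ) • φ x + (1 / 2 : ℝ) • φ y ≤ φ ((1 / 2 : ℝ) • x + (1 / 2 : ℝ) • y) :=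
    hφ.2 hx hy (by norm_num) (by norm_num) (by norm_num)
  have hcenter : (1 / 2 : ℝ) • x + (1 / 2 : ℝ) • y = c := by
    rw [← smul_add, hc, smul_smul, one_div_mul_cancel two_ne_zero, one_smul]
  rw [hcenter, smul_eq_mul, smul_eq_mul] at hmid
  linarith

theorem combo_le_of_concaveOn_of_mem_closure {E : Type*} [NormedAddCommGroup E]
    [NormedSpace ℝ E] [FiniteDimensional ℝ E] {s : Set E} (hs : IsOpen s) {φ : E → ℝ}
    (hφ : ConcaveOn ℝ s φ) {c : ℝ} (hc : ∀ p ∈ s, c ≤ φ p) {a x : E} (ha : a ∈ closure s)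
    (hx : x ∈ s) {α β : ℝ} (hα : 0 ≤ α) (hβ : 0 < β) (hαβ : α + β = 1) :
    α * c + β * φ x ≤ φ (α • a + β • x) := by
  have hmem : α • a + β • x ∈ s :=
    interior_subset <| hφ.1.combo_closure_interior_mem_interior ha (hs.interior_eq.symm ▸ hx)
      hα hβ hαβ
  have hlim : Tendsto (fun p ↦ φ (α • p + β • x)) (𝓝[s] a) (𝓝 (φ (α • a + β • x))) := by
    have hφcont : ContinuousAt φ (α • a + β • x) :=
      (hφ.continuousOn hs).continuousAt (hs.mem_nhds hmem)
    have hcombo : Continuous fun p : E ↦ α • p + β • x := by fun_prop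
    exact hφcont.tendsto.comp (hcombo.continuousAt.tendsto.mono_left nhdsWithin_le_nhds)
  have : (𝓝[s] a).NeBot := mem_closure_iff_nhdsWithin_neBot.1 ha
  refine ge_of_tendsto hlim ?_
  filter_upwards [self_mem_nhdsWithin] with p hp
  calc α * c + β * φ x ≤ α * φ p + β * φ x := by gcongr; exact hc p hp
    _ ≤ φ (α • p + β • x) := hφ.2 hp hx hα hβ.le hαβ

theorem concaveOn_add_comp_one_sub {h : ℝ → ℝ} (hconc : ConcaveOn ℝ (Ioo 0 1) h) :
    ConcaveOn ℝ (Ioo 0 1) fun l ↦ h l + h (1 - l) := by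
  refine hconc.add ?_
  simpa [Function.comp_def] using
    hconc.comp_affineMap (AffineEquiv.constVSub ℝ (1 : ℝ)).toAffineMap

theorem one_add_two_mul_apply_half_le {h : ℝ → ℝ} (hconc : ConcaveOn ℝ (Ioo 0 1) h)
    (hsum : ∀ l ∈ Ioo (0 : ℝ) 1, 1 ≤ h l + h (1 - l)) :
    1 + 2 * h (1 / 2) ≤ 2 * h (1 / 4) + 2 * h (3 / 4) := by
  have hzero : (0 : ℝ) ∈ closure (Ioo 0 1) := by simp [closure_Ioo]
  have hquarter : 1 / 2 * 1 + 1 / 2 * (h (1 / 2) + h (1 - 1 / 2)) ≤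
      h ((1 / 2 : ℝ) • 0 + (1 / 2 : ℝ) • (1 / 2)) +
        h (1 - ((1 / 2 : ℝ) • 0 + (1 / 2 : ℝ) • (1 / 2))) :=
    combo_le_of_concaveOn_of_mem_closure isOpen_Ioo (concaveOn_add_comp_one_sub hconc) hsum hzero
      (by norm_num) (by norm_num) (by norm_num) (by norm_num)
  rw [show (1 / 2 : ℝ) • (0 : ℝ) + (1 / 2 : ℝ) • (1 / 2) = 1 / 4 by norm_num,
    show (1 - 1 / 2 : ℝ) = 1 / 2 by norm_num,
    show (1 - 1 / 4 : ℝ) = 3 / 4 by norm_num] at hquarter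
  linarith

/-- `h`-convexity of `f` on `s` (Varošanec): Jensen's two-point inequality with the weights `1 - l`
and `l` on the values of `f` replaced by `h (1 - l)` and `h l`. Only `l ∈ (0, 1)` is considered, so
the values of `h` outside `(0, 1)` are irrelevant. -/
def HConvexOn (h : ℝ → ℝ) (s : Set ℝ) (f : ℝ → ℝ) : Prop :=
  ∀ x ∈ s, ∀ y ∈ s, ∀ l ∈ Ioo (0 : ℝ) 1,
    f ((1 - l) * x + l * y) ≤ h (1 - l) * f x + h l * f y

namespace HConvexOn

variable {h f : ℝ → ℝ} {s : Set ℝ} {x y z m : ℝ}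

theorem apply_half_le (hf : HConvexOn h s f) (hx : x ∈ s) (hy : y ∈ s) :
    f ((x + y) / 2) ≤ h (1 / 2) * (f x + f y) := by
  have hmid := hf x hx y hy (1 / 2) (by norm_num)
  rw [show (1 - 1 / 2 : ℝ) = 1 / 2 by norm_num] at hmid
  calc f ((x + y) / 2) = f (1 / 2 * x + 1 / 2 * y) := by ring_nf
    _ ≤ h (1 / 2) * f x + h (1 / 2) * f y := hmid
    _ = h (1 / 2) * (f x + f y) := by ring

theorem one_le_add_of_pos (hf : HConvexOn h s f) (hx : x ∈ s) (hfx : 0 < f x) {l : ℝ}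
    (hl : l ∈ Ioo (0 : ℝ) 1) : 1 ≤ h l + h (1 - l) := by
  have hself := hf x hx x hx l hl
  rw [show (1 - l) * x + l * x = x by ring] at hself
  exact le_of_mul_le_mul_right (by linarith) hfx

theorem one_add_two_mul_apply_half_mul_le (hf : HConvexOn h s f)
    (hconc : ConcaveOn ℝ (Ioo 0 1) h) (hx : x ∈ s) (hfx : 0 ≤ f x) :
    (1 + 2 * h (1 / 2)) * f x ≤ (2 * h (1 / 4) + 2 * h (3 / 4)) * f x := by
  rcases hfx.eq_or_lt with hzero | hpos
  · simp only [← hzero, mul_zero, le_refl]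
  · have hsum : ∀ l ∈ Ioo (0 : ℝ) 1, 1 ≤ h l + h (1 - l) := fun _ ↦ hf.one_le_add_of_pos hx hpos
    exact mul_le_mul_of_nonneg_right (one_add_two_mul_apply_half_le hconc hsum) hfx

theorem popoviciu_of_mean_eq (hf : HConvexOn h s f) (hconc : ConcaveOn ℝ (Ioo 0 1) h)
    (hf0 : ∀ t ∈ s, 0 ≤ f t) (hx : x ∈ s) (hm : m ∈ s) (hz : z ∈ s) (hmean : x + m + z = 3 * m) :
    f ((x + m) / 2) + f ((m + z) / 2) + f ((z + x) / 2) ≤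
      max (h (1 / 2)) (2 * h (1 / 4)) * (f x + f m + f z) + 2 * h (3 / 4) * f m := by
  have hfx := hf0 x hx
  have hfz := hf0 z hz
  have hfm := hf0 m hm
  have hzx : (z + x) / 2 = m := by linarith
  calc f ((x + m) / 2) + f ((m + z) / 2) + f ((z + x) / 2)
      ≤ h (1 / 2) * (f x + f m) + h (1 / 2) * (f m + f z) + f m := by
        rw [hzx]
        gcongr
        exacts [hf.apply_half_le hx hm, hf.apply_half_le hm hz]
    _ = h (1 / 2) * (f x + f z) + (1 + 2 * h (1 / 2)) * f m := by ring
    _ ≤ h (1 / 2) * (f x + f z) + (2 * h (1 / 4) + 2 * h (3 / 4)) * f m := by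
        exact add_le_add_right (hf.one_add_two_mul_apply_half_mul_le hconc hm hfm) _
    _ = h (1 / 2) * (f x + f z) + 2 * h (1 / 4) * f m + 2 * h (3 / 4) * f m := by ring
    _ ≤ max (h (1 / 2)) (2 * h (1 / 4)) * (f x + f z) +
          max (h (1 / 2)) (2 * h (1 / 4)) * f m + 2 * h (3 / 4) * f m := by
        gcongr
        exacts [le_max_left _ _, le_max_right _ _]
    _ = max (h (1 / 2)) (2 * h (1 / 4)) * (f x + f m + f z) + 2 * h (3 / 4) * f m := by ring

theorem add_le_of_mem_Ioo (hf : HConvexOn h s f) (hconc : ConcaveOn ℝ (Ioo 0 1) h)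
    (hm : m ∈ s) (hz : z ∈ s) (hfm : 0 ≤ f m) (hfz : 0 ≤ f z) {u : ℝ} (hu : u ∈ Ioo 0 (1 / 2)) :
    f ((1 - u) * m + u * z) + f ((1 - (1 / 2 - u)) * m + (1 / 2 - u) * z) ≤
      2 * h (1 / 4) * f z + 2 * h (3 / 4) * f m := by
  obtain ⟨hu0, hu1⟩ := hu
  have hl : u ∈ Ioo (0 : ℝ) 1 := ⟨hu0, by linarith⟩
  have hl' : 1 / 2 - u ∈ Ioo (0 : ℝ) 1 := ⟨by linarith, by linarith⟩
  have hnear : h u + h (1 / 2 - u) ≤ 2 * h (1 / 4) :=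
    add_le_two_mul_of_concaveOn hconc hl hl' (by rw [smul_eq_mul]; ring)
  have hfar : h (1 - u) + h (1 - (1 / 2 - u)) ≤ 2 * h (3 / 4) :=
    add_le_two_mul_of_concaveOn hconc (Ioo.one_sub_mem hl) (Ioo.one_sub_mem hl')
      (by rw [smul_eq_mul]; ring)
  calc f ((1 - u) * m + u * z) + f ((1 - (1 / 2 - u)) * m + (1 / 2 - u) * z)
      ≤ (h (1 - u) * f m + h u * f z) + (h (1 - (1 / 2 - u)) * f m + h (1 / 2 - u) * f z) :=
        add_le_add (hf m hm z hz u hl) (hf m hm z hz (1 / 2 - u) hl')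
    _ = (h u + h (1 / 2 - u)) * f z + (h (1 - u) + h (1 - (1 / 2 - u))) * f m := by ring
    _ ≤ 2 * h (1 / 4) * f z + 2 * h (3 / 4) * f m := by gcongr

theorem popoviciu_of_mul_pos (hf : HConvexOn h s f) (hconc : ConcaveOn ℝ (Ioo 0 1) h)
    (hf0 : ∀ t ∈ s, 0 ≤ f t) (hx : x ∈ s) (hy : y ∈ s) (hz : z ∈ s) (hm : m ∈ s)
    (hmean : x + y + z = 3 * m) (hside : 0 < (x - m) * (y - m)) :
    f ((x + y) / 2) + f ((y + z) / 2) + f ((z + x) / 2) ≤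
      max (h (1 / 2)) (2 * h (1 / 4)) * (f x + f y + f z) + 2 * h (3 / 4) * f m := by
  have hfx := hf0 x hx
  have hfy := hf0 y hy
  have hfz := hf0 z hz
  obtain ⟨t, ⟨ht0, ht1⟩, ht⟩ := exists_mem_Ioo_eq_mul_add_of_mul_pos hside
  have hyt : y - m = t * (m - z) := by linear_combination ht + t * hmean
  have hyz : (y + z) / 2 = (1 - (1 / 2 - t / 2)) * m + (1 / 2 - t / 2) * z := by
    linear_combination (1 / 2) * hyt
  have hzx : (z + x) / 2 = (1 - t / 2) * m + t / 2 * z := by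
    linear_combination (1 / 2) * hmean - (1 / 2) * hyt
  have hsegment := hf.add_le_of_mem_Ioo hconc hm hz (hf0 m hm) hfz (u := t / 2)
    ⟨by linarith, by linarith⟩
  rw [← hyz, ← hzx] at hsegment
  calc f ((x + y) / 2) + f ((y + z) / 2) + f ((z + x) / 2)
      ≤ h (1 / 2) * (f x + f y) + 2 * h (1 / 4) * f z + 2 * h (3 / 4) * f m := by
        linarith [hf.apply_half_le hx hy]
    _ ≤ max (h (1 / 2)) (2 * h (1 / 4)) * (f x + f y) +
          max (h (1 / 2)) (2 * h (1 / 4)) * f z + 2 * h (3 / 4) * f m := by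
        gcongr
        exacts [le_max_left _ _, le_max_right _ _]
    _ = max (h (1 / 2)) (2 * h (1 / 4)) * (f x + f y + f z) + 2 * h (3 / 4) * f m := by ring

end HConvexOn

theorem popoviciu_h_convex_general {h : ℝ → ℝ} (hconc : ConcaveOn ℝ (Ioo 0 1) h) {s : Set ℝ}
    (hs : Convex ℝ s) {f : ℝ → ℝ} (hf0 : ∀ t ∈ s, 0 ≤ f t) (hf : HConvexOn h s f) {x y z : ℝ}
    (hx : x ∈ s) (hy : y ∈ s) (hz : z ∈ s) :
    f ((x + y) / 2) + f ((y + z) / 2) + f ((z + x) / 2) ≤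
      max (h (1 / 2)) (2 * h (1 / 4)) * (f x + f y + f z) +
        2 * h (3 / 4) * f ((x + y + z) / 3) := by
  have hm : (x + y + z) / 3 ∈ s := add_add_div_three_mem_of_convex hs hx hy hz
  have hmean : x + y + z = 3 * ((x + y + z) / 3) := by ring
  generalize (x + y + z) / 3 = m at hm hmean ⊢
  by_cases hxm : x = m
  · subst hxm
    linarith [hf.popoviciu_of_mean_eq hconc hf0 hz hm hy (by linarith)]
  by_cases hym : y = m
  · subst hym
    exact hf.popoviciu_of_mean_eq hconc hf0 hx hm hz hmean
  by_cases hzm : z = m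
  · subst hzm
    linarith [hf.popoviciu_of_mean_eq hconc hf0 hy hm hx (by linarith)]
  rcases mul_pos_or_mul_pos_or_mul_pos (sub_ne_zero.2 hxm) (sub_ne_zero.2 hym)
    (sub_ne_zero.2 hzm) with hxy | hyz | hzx
  · exact hf.popoviciu_of_mul_pos hconc hf0 hx hy hz hm hmean hxy
  · linarith [hf.popoviciu_of_mul_pos hconc hf0 hy hz hx hm (by linarith) hyz]
  · linarith [hf.popoviciu_of_mul_pos hconc hf0 hz hx hy hm (by linarith) hzx]

/-- Popoviciu's inequality for `h`-convex functions with `h` concave. -/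
theorem popoviciu_h_convex (h : ℝ → ℝ)
    (hpos : ∀ l ∈ Set.Ioo (0 : ℝ) 1, 0 < h l)
    (hconc : ConcaveOn ℝ (Set.Ioo (0 : ℝ) 1) h)
    (hsum : ∀ l ∈ Set.Ioo (0 : ℝ) 1, 1 ≤ h l + h (1 - l))
    (I : Set ℝ) (hI : Convex ℝ I) (f : ℝ → ℝ)
    (hf0 : ∀ t ∈ I, 0 ≤ f t)
    (hfh : ∀ x ∈ I, ∀ y ∈ I, ∀ l ∈ Set.Ioo (0 : ℝ) 1,
      f ((1 - l) * x + l * y) ≤ h (1 - l) * f x + h l * f y) :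
    ∀ x ∈ I, ∀ y ∈ I, ∀ z ∈ I,
      max (h (1 / 2)) (2 * h (1 / 4)) * (f x + f y + f z) +
          2 * h (3 / 4) * f ((x + y + z) / 3) ≥
        f ((x + y) / 2) + f ((y + z) / 2) + f ((z + x) / 2) :=
  fun _ hx _ hy _ hz ↦ popoviciu_h_convex_general hconc hI hf0 hfh hx hy hz
end

section
/- For all real numbers x, y, z ≥ 0: x^(1/2) + y^(1/2) + z^(1/2) + √3·((x+y+z)/3)^(1/2) ≥ ((x+y)/2)^(1/2) + ((y+z)/2)^(1/2) + ((z+x)/2)^(1/2). -/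
/-!
Write `S = √x + √y + √z` and let `m` be the mean of `x, y, z`. Subadditivity of the square root
bounds the right-hand side by `√2 · S ≤ S + S / 2`, and concavity, in the form
`S / 3 ≤ √m`, bounds the surplus `S / 2` by `(3 / 2) · √m ≤ √3 · √m`.
-/

theorem sqrt_add_le_add_sqrt (x y : ℝ) : √(x + y) ≤ √x + √y := by
  refine Real.sqrt_le_iff.mpr ⟨by positivity, ?_⟩
  have le_sq_sqrt (t : ℝ) : t ≤ √t ^ 2 := Real.sq_sqrt'.symm ▸ le_max_left t 0
  calc x + y ≤ √x ^ 2 + √y ^ 2 := add_le_add (le_sq_sqrt x) (le_sq_sqrt y)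
    _ ≤ (√x + √y) ^ 2 :=
      pow_add_pow_le (Real.sqrt_nonneg x) (Real.sqrt_nonneg y) two_ne_zero

theorem sqrt_add_div_two_le (x y : ℝ) : √((x + y) / 2) ≤ √2 * ((√x + √y) / 2) :=
  calc √((x + y) / 2) = √(x + y) / √2 := Real.sqrt_div' _ zero_le_two
    _ ≤ (√x + √y) / √2 := by gcongr; exact sqrt_add_le_add_sqrt x y
    _ = √2 * ((√x + √y) / 2) := by
      rw [div_eq_mul_inv, ← Real.sqrt_div_self]
      ring

theorem sum_sqrt_div_card_le_sqrt_sum_div_card {ι : Type*} {s : Finset ι} {f : ι → ℝ}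
    (hf : ∀ i ∈ s, 0 ≤ f i) :
    (∑ i ∈ s, √(f i)) / s.card ≤ √((∑ i ∈ s, f i) / s.card) := by
  apply Real.le_sqrt_of_sq_le
  calc ((∑ i ∈ s, √(f i)) / s.card) ^ 2 ≤ (∑ i ∈ s, √(f i) ^ 2) / s.card :=
        sum_div_card_sq_le_sum_sq_div_card
    _ = (∑ i ∈ s, f i) / s.card := by
      rw [Finset.sum_congr rfl fun i hi => Real.sq_sqrt (hf i hi)]

/-- For nonnegative reals `x, y, z`:
`√x + √y + √z + √3 · √((x+y+z)/3) ≥ √((x+y)/2) + √((y+z)/2) + √((z+x)/2)`. -/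
theorem popoviciu_sqrt_application (x y z : ℝ) (hx : 0 ≤ x) (hy : 0 ≤ y) (hz : 0 ≤ z) :
    Real.sqrt x + Real.sqrt y + Real.sqrt z +
        Real.sqrt 3 * Real.sqrt ((x + y + z) / 3) ≥
      Real.sqrt ((x + y) / 2) + Real.sqrt ((y + z) / 2) + Real.sqrt ((z + x) / 2) := by
  have mean_sqrt_le : (√x + √y + √z) / 3 ≤ √((x + y + z) / 3) := by
    simpa [Fin.sum_univ_three] using
      sum_sqrt_div_card_le_sqrt_sum_div_card (s := Finset.univ) (f := ![x, y, z])
        (by simp [Fin.forall_fin_succ, hx, hy, hz])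
  have sqrt_two_le : √2 ≤ 3 / 2 := Real.sqrt_le_iff.mpr (by norm_num)
  have le_sqrt_three : 3 / 2 ≤ √3 := Real.le_sqrt_of_sq_le (by norm_num)
  calc √((x + y) / 2) + √((y + z) / 2) + √((z + x) / 2)
      ≤ √2 * (√x + √y + √z) := by
        linarith [sqrt_add_div_two_le x y, sqrt_add_div_two_le y z, sqrt_add_div_two_le z x]
    _ ≤ 3 / 2 * (√x + √y + √z) := by gcongr
    _ = √x + √y + √z + 3 / 2 * ((√x + √y + √z) / 3) := by ring
    _ ≤ √x + √y + √z + √3 * √((x + y + z) / 3) := by gcongr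
end

section
/- Popoviciu-type inequality, supermultiplicative case: let h : (0,1) → (0,∞) satisfy h(λ)+h(1−λ) ≥ 1 for all λ ∈ (0,1), be supermultiplicative (h(xy) ≥ h(x)h(y) for all x, y ∈ (0,1) with xy ∈ (0,1)) with h(1/3) < 1, and let f : I → ℝ be a nonnegative h-convex function on an interval I ⊆ ℝ satisfying the Jensen-type inequality f((x₁+⋯+xₙ)/n) ≤ h(1/n)(f(x₁)+⋯+f(xₙ)). Then for all x, y, z ∈ I: f(x) + f(y) + f(z) − f((x+y+z)/3) ≥ ((1 − h(1/3))/(2·h(1/2)))·( f((x+y)/2) + f((y+z)/2) + f((z+x)/2) ). -/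
/-!
Summed over the three sides of the triangle, the two-point Jensen inequality bounds the midpoint
values by `2 * h (1 / 2)` times the sum `S` of the vertex values. By the three-point inequality,
subtracting the centroid value from `S` leaves at least `(1 - h (1 / 3)) * S`. Eliminating `S`
between the two bounds gives the claim.
-/

section MeanJensen

variable {𝕜 E : Type*} [Field 𝕜] [LinearOrder 𝕜] [AddCommMonoid E] [SMul 𝕜 E]

/-- Jensen's inequality with constant `c` for the arithmetic mean of any `n` points of `s`. Convex
functions have `c = 1 / n`, and `h`-convex ones `c = h (1 / n)` if `h` is supermultiplicative and
`f` is nonnegative. -/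
def MeanJensenOn (n : ℕ) (c : 𝕜) (s : Set E) (f : E → 𝕜) : Prop :=
  ∀ x : Fin n → E, (∀ i, x i ∈ s) → f ((n : 𝕜)⁻¹ • ∑ i, x i) ≤ c * ∑ i, f (x i)

variable {s : Set E} {f : E → 𝕜} {a b : 𝕜} {x y z : E}

theorem MeanJensenOn.map_midpoint_le (hf : MeanJensenOn 2 a s f) (hx : x ∈ s) (hy : y ∈ s) :
    f ((2 : 𝕜)⁻¹ • (x + y)) ≤ a * (f x + f y) := by
  simpa [Fin.sum_univ_two] using hf ![x, y] (by simp [Fin.forall_fin_two, hx, hy])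

theorem MeanJensenOn.map_centroid_le (hf : MeanJensenOn 3 b s f)
    (hx : x ∈ s) (hy : y ∈ s) (hz : z ∈ s) :
    f ((3 : 𝕜)⁻¹ • (x + y + z)) ≤ b * (f x + f y + f z) := by
  simpa [Fin.sum_univ_three] using hf ![x, y, z] (by simp [Fin.forall_fin_succ, hx, hy, hz])

variable [IsStrictOrderedRing 𝕜]

theorem MeanJensenOn.sum_map_midpoint_le (hf : MeanJensenOn 2 a s f)
    (hx : x ∈ s) (hy : y ∈ s) (hz : z ∈ s) :
    f ((2 : 𝕜)⁻¹ • (x + y)) + f ((2 : 𝕜)⁻¹ • (y + z)) + f ((2 : 𝕜)⁻¹ • (z + x)) ≤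
      2 * a * (f x + f y + f z) := by
  linarith [hf.map_midpoint_le hx hy, hf.map_midpoint_le hy hz, hf.map_midpoint_le hz hx]

theorem popoviciu_h_convex_supermultiplicative_general (ha : 0 < a) (hb : b ≤ 1)
    (hf₂ : MeanJensenOn 2 a s f) (hf₃ : MeanJensenOn 3 b s f)
    (hx : x ∈ s) (hy : y ∈ s) (hz : z ∈ s) :
    (1 - b) / (2 * a) *
        (f ((2 : 𝕜)⁻¹ • (x + y)) + f ((2 : 𝕜)⁻¹ • (y + z)) + f ((2 : 𝕜)⁻¹ • (z + x))) ≤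
      f x + f y + f z - f ((3 : 𝕜)⁻¹ • (x + y + z)) := by
  have coeff_nonneg : 0 ≤ (1 - b) / (2 * a) := div_nonneg (sub_nonneg.2 hb) (by positivity)
  calc
    _ ≤ (1 - b) / (2 * a) * (2 * a * (f x + f y + f z)) :=
      mul_le_mul_of_nonneg_left (hf₂.sum_map_midpoint_le hx hy hz) coeff_nonneg
    _ = f x + f y + f z - b * (f x + f y + f z) := by field_simp
    _ ≤ f x + f y + f z - f ((3 : 𝕜)⁻¹ • (x + y + z)) :=
      sub_le_sub_left (hf₃.map_centroid_le hx hy hz) _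

end MeanJensen

/-- Popoviciu-type inequality for `h`-convex functions, supermultiplicative case. -/
theorem popoviciu_h_convex_supermultiplicative (h : ℝ → ℝ)
    (hpos : ∀ l ∈ Set.Ioo (0 : ℝ) 1, 0 < h l)
    (hsum : ∀ l ∈ Set.Ioo (0 : ℝ) 1, 1 ≤ h l + h (1 - l))
    (hsuper : ∀ x ∈ Set.Ioo (0 : ℝ) 1, ∀ y ∈ Set.Ioo (0 : ℝ) 1,
      x * y ∈ Set.Ioo (0 : ℝ) 1 → h x * h y ≤ h (x * y))
    (hthird : h (1 / 3) < 1)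
    (I : Set ℝ) (hI : Convex ℝ I) (f : ℝ → ℝ)
    (hf0 : ∀ t ∈ I, 0 ≤ f t)
    (hfh : ∀ x ∈ I, ∀ y ∈ I, ∀ l ∈ Set.Ioo (0 : ℝ) 1,
      f ((1 - l) * x + l * y) ≤ h (1 - l) * f x + h l * f y)
    (hjensen : ∀ n : ℕ, 1 ≤ n → ∀ x : Fin n → ℝ, (∀ i, x i ∈ I) →
      f ((∑ i, x i) / n) ≤ h (1 / n) * ∑ i, f (x i)) :
    ∀ x ∈ I, ∀ y ∈ I, ∀ z ∈ I,
      f x + f y + f z - f ((x + y + z) / 3) ≥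
        ((1 - h (1 / 3)) / (2 * h (1 / 2))) *
          (f ((x + y) / 2) + f ((y + z) / 2) + f ((z + x) / 2)) := by
  have jensen (n : ℕ) (hn : 1 ≤ n) : MeanJensenOn n (h (1 / n)) I f := fun x hx ↦ by
    simpa only [smul_eq_mul, ← div_eq_inv_mul] using hjensen n hn x hx
  intro x hx y hy z hz
  simpa only [smul_eq_mul, ← div_eq_inv_mul] using
    popoviciu_h_convex_supermultiplicative_general (hpos (1 / 2) (by norm_num)) hthird.le
      (jensen 2 one_le_two) (jensen 3 (by norm_num)) hx hy hz
end

section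
/- For all real numbers x, y, z ≥ 0: x^(1/2) + y^(1/2) + z^(1/2) − ((x+y+z)/3)^(1/2) ≥ ((1 − (1/3)^(1/2))/(2·(1/2)^(1/2)))·( ((x+y)/2)^(1/2) + ((y+z)/2)^(1/2) + ((z+x)/2)^(1/2) ). -/
/-!
For `0 ≤ p ≤ 1` the power `t ↦ t ^ p` is subadditive and multiplicative on `[0, ∞)`. Hence, with
`S = x ^ p + y ^ p + z ^ p`, the power of the mean is at most `(1 / 3) ^ p * S` and the powers of
the three pairwise means add up to at most `2 * (1 / 2) ^ p * S`. The constant is the one for which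
these two bounds combine to `S`; both are equalities when two of the variables vanish and `0 < p`.
-/

section Subadditivity

variable {ι : Type*} {s : Finset ι} {f : ι → ℝ} {p : ℝ}

theorem rpow_sum_le_sum_rpow (hs : s.Nonempty) (hf : ∀ i ∈ s, 0 ≤ f i) (hp : 0 ≤ p)
    (hp1 : p ≤ 1) : (∑ i ∈ s, f i) ^ p ≤ ∑ i ∈ s, f i ^ p :=
  Finset.le_sum_nonempty_of_subadditive_on_pred (· ^ p) (0 ≤ ·)
    (fun _ _ ha hb ↦ Real.rpow_add_le_add_rpow ha hb hp hp1) (fun _ _ ↦ add_nonneg) f s hs hf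

theorem rpow_sum_div_le_mul_sum_rpow {c : ℝ} (hc : 0 ≤ c) (hs : s.Nonempty)
    (hf : ∀ i ∈ s, 0 ≤ f i) (hp : 0 ≤ p) (hp1 : p ≤ 1) :
    ((∑ i ∈ s, f i) / c) ^ p ≤ (1 / c) ^ p * ∑ i ∈ s, f i ^ p := by
  rw [div_eq_mul_one_div, mul_comm, Real.mul_rpow (one_div_nonneg.2 hc) (Finset.sum_nonneg hf)]
  gcongr
  exact rpow_sum_le_sum_rpow hs hf hp hp1

end Subadditivity

section ThreeVariables

variable {x y z p : ℝ}

theorem rpow_mean_two_le (hx : 0 ≤ x) (hy : 0 ≤ y) (hp : 0 ≤ p) (hp1 : p ≤ 1) :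
    ((x + y) / 2) ^ p ≤ (1 / 2) ^ p * (x ^ p + y ^ p) := by
  simpa only [Fin.sum_univ_two, Matrix.cons_val] using
    rpow_sum_div_le_mul_sum_rpow (f := ![x, y]) zero_le_two Finset.univ_nonempty
      (by simp [hx, hy]) hp hp1

theorem rpow_mean_three_le (hx : 0 ≤ x) (hy : 0 ≤ y) (hz : 0 ≤ z) (hp : 0 ≤ p) (hp1 : p ≤ 1) :
    ((x + y + z) / 3) ^ p ≤ (1 / 3) ^ p * (x ^ p + y ^ p + z ^ p) := by
  simpa only [Fin.sum_univ_three, Matrix.cons_val] using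
    rpow_sum_div_le_mul_sum_rpow (f := ![x, y, z]) zero_le_three Finset.univ_nonempty
      (by simp [Fin.forall_fin_succ, hx, hy, hz]) hp hp1

theorem sum_rpow_pairwise_mean_le (hx : 0 ≤ x) (hy : 0 ≤ y) (hz : 0 ≤ z) (hp : 0 ≤ p)
    (hp1 : p ≤ 1) :
    ((x + y) / 2) ^ p + ((y + z) / 2) ^ p + ((z + x) / 2) ^ p ≤
      2 * (1 / 2) ^ p * (x ^ p + y ^ p + z ^ p) := by
  linarith [rpow_mean_two_le hx hy hp hp1, rpow_mean_two_le hy hz hp hp1,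
    rpow_mean_two_le hz hx hp hp1]

theorem popoviciu_sqrt_application'_general (hx : 0 ≤ x) (hy : 0 ≤ y) (hz : 0 ≤ z) (hp : 0 ≤ p)
    (hp1 : p ≤ 1) :
    x ^ p + y ^ p + z ^ p - ((x + y + z) / 3) ^ p ≥
      ((1 - (1 / 3) ^ p) / (2 * (1 / 2) ^ p)) *
        (((x + y) / 2) ^ p + ((y + z) / 2) ^ p + ((z + x) / 2) ^ p) := by
  have third_rpow_le_one : (1 / 3 : ℝ) ^ p ≤ 1 :=
    Real.rpow_le_one (by norm_num) (by norm_num) hp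
  calc
    ((1 - (1 / 3) ^ p) / (2 * (1 / 2) ^ p)) *
        (((x + y) / 2) ^ p + ((y + z) / 2) ^ p + ((z + x) / 2) ^ p)
      ≤ ((1 - (1 / 3) ^ p) / (2 * (1 / 2) ^ p)) *
          (2 * (1 / 2) ^ p * (x ^ p + y ^ p + z ^ p)) :=
        mul_le_mul_of_nonneg_left (sum_rpow_pairwise_mean_le hx hy hz hp hp1)
          (div_nonneg (sub_nonneg.2 third_rpow_le_one) (by positivity))
    _ = (1 - (1 / 3) ^ p) * (x ^ p + y ^ p + z ^ p) := by
        rw [← mul_assoc, div_mul_cancel₀ _ (by positivity)]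
    _ = x ^ p + y ^ p + z ^ p - (1 / 3) ^ p * (x ^ p + y ^ p + z ^ p) := one_sub_mul _ _
    _ ≤ x ^ p + y ^ p + z ^ p - ((x + y + z) / 3) ^ p :=
        sub_le_sub_left (rpow_mean_three_le hx hy hz hp hp1) _

end ThreeVariables

/-- For nonnegative reals `x, y, z`:
`√x + √y + √z − √((x+y+z)/3) ≥ ((1−√(1/3))/(2√(1/2)))(√((x+y)/2)+√((y+z)/2)+√((z+x)/2))`. -/
theorem popoviciu_sqrt_application' (x y z : ℝ) (hx : 0 ≤ x) (hy : 0 ≤ y) (hz : 0 ≤ z) :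
    Real.sqrt x + Real.sqrt y + Real.sqrt z - Real.sqrt ((x + y + z) / 3) ≥
      ((1 - Real.sqrt (1 / 3)) / (2 * Real.sqrt (1 / 2))) *
        (Real.sqrt ((x + y) / 2) + Real.sqrt ((y + z) / 2) + Real.sqrt ((z + x) / 2)) := by
  simpa only [Real.sqrt_eq_rpow] using
    popoviciu_sqrt_application'_general hx hy hz one_half_pos.le one_half_lt_one.le
end

section
/- Popoviciu-type inequality for h-Jensen pairs: let h : (0,1) → (0,∞) be concave with h(λ)+h(1−λ) ≥ 1 for all λ ∈ (0,1), let I ⊆ ℝ be an interval, and let f, g : I → ℝ be positive functions such that f((1−λ)x + λy) ≤ h(1−λ)g(x) + h(λ)g(y) for all x, y ∈ I and λ ∈ (0,1). Then for all x, y, z ∈ I: max{h(1/2), 2·h(1/4)}·(g(x) + g(y) + g(z)) + 2·h(3/4)·g((x+y+z)/3) ≥ f((x+y)/2) + f((y+z)/2) + f((z+x)/2). -/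
/-!
Let `m = (x + y + z) / 3`. Among `x - m`, `y - m`, `z - m`, either two have the same sign or one
vanishes, so after relabelling `x` and `y` lie strictly on the same side of `m`, or `z = m`.

In the first case `f ((x + y) / 2) ≤ h (1 / 2) * (g x + g y)`, while `(y + z) / 2` and `(z + x) / 2`
are `(1 - s) * m + s * z` and `(1 - t) * m + t * z` with `s, t > 0` and `s + t = 1 / 2`; concavity
gives `h s + h t ≤ 2 * h (1 / 4)` and `h (1 - s) + h (1 - t) ≤ 2 * h (3 / 4)`.

In the second case `(x + y) / 2 = m`, and the pair inequality with both points equal to `m` bounds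
`f m` by `(h (1 - l) + h l) * g m` for every `l`. Concavity bounds `h (1 - l) + h l` by its linear
extrapolation from `1 / 2` and `1 / 4`, whose value at the excluded endpoint `l = 0` suffices.
-/

open Set

/-- `(f, g)` is an `h`-Jensen pair on `S`. As for `ConvexOn`, the functions are total and only their
values on `S`, and those of `h` on `(0, 1)`, matter. -/
def IsHJensenPair {𝕜 E : Type*} [Ring 𝕜] [Preorder 𝕜] [AddCommMonoid E] [SMul 𝕜 E]
    (h : 𝕜 → 𝕜) (S : Set E) (f g : E → 𝕜) : Prop :=
  ∀ x ∈ S, ∀ y ∈ S, ∀ l ∈ Ioo (0 : 𝕜) 1, f ((1 - l) • x + l • y) ≤ h (1 - l) * g x + h l * g y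

section

variable {𝕜 : Type*} [Field 𝕜] [LinearOrder 𝕜] [IsStrictOrderedRing 𝕜]

theorem le_of_forall_mem_Ioo_le_add_mul {a b c δ : 𝕜} (hδ : 0 < δ)
    (hle : ∀ l ∈ Ioo 0 δ, a ≤ b + l * c) : a ≤ b := by
  refine le_of_forall_pos_le_add fun ε hε => ?_
  obtain ⟨r, hr, hrε⟩ := exists_pos_mul_lt hε |c|
  obtain ⟨l, hl, hlt⟩ := exists_between (lt_min hr hδ)
  have hlc : l * c ≤ ε := calc
    l * c ≤ l * |c| := mul_le_mul_of_nonneg_left (le_abs_self c) hl.le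
    _ ≤ r * |c| := mul_le_mul_of_nonneg_right (hlt.le.trans (min_le_left r δ)) (abs_nonneg c)
    _ ≤ ε := (mul_comm r |c|).trans_le hrε.le
  linarith [hle l ⟨hl, hlt.trans_le (min_le_right r δ)⟩]

theorem mul_pos_or_eq_zero_of_three (a b c : 𝕜) :
    (0 < a * b ∨ c = 0) ∨ (0 < b * c ∨ a = 0) ∨ (0 < c * a ∨ b = 0) := by
  by_contra! hne
  obtain ⟨⟨hab, hc⟩, ⟨hbc, ha⟩, ⟨hca, hb⟩⟩ := hne
  have hsq : 0 < (a * b * c) ^ 2 := by positivity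
  have hprod : (a * b) * (b * c) * (c * a) ≤ 0 :=
    mul_nonpos_of_nonneg_of_nonpos (mul_nonneg_of_nonpos_of_nonpos hab hbc) hca
  linarith

theorem div_add_pos_of_mul_pos {a b : 𝕜} (hab : 0 < a * b) : 0 < a / (a + b) := by
  rcases pos_and_pos_or_neg_and_neg_of_mul_pos hab with ⟨ha, hb⟩ | ⟨ha, hb⟩
  · exact div_pos ha (add_pos ha hb)
  · exact div_pos_of_neg_of_neg ha (add_neg ha hb)

theorem add_le_two_mul_of_concaveOn_s16 {E : Type*} [AddCommMonoid E] [Module 𝕜 E] {S : Set E}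
    {h : E → 𝕜} (hconc : ConcaveOn 𝕜 S h) {a b c : E} (ha : a ∈ S) (hb : b ∈ S)
    (habc : a + b = c + c) : h a + h b ≤ 2 * h c := by
  have hmid : (1 / 2 : 𝕜) • a + (1 / 2 : 𝕜) • b = c := by
    rw [← smul_add, habc, smul_add, ← add_smul, add_halves, one_smul]
  have hle := hconc.2 ha hb one_half_pos.le one_half_pos.le (add_halves 1)
  rw [hmid, smul_eq_mul, smul_eq_mul] at hle
  linarith

theorem add_symm_le_of_concaveOn_Ioo {h : 𝕜 → 𝕜} (hconc : ConcaveOn 𝕜 (Ioo 0 1) h) {l : 𝕜}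
    (hl : l ∈ Ioo 0 (1 / 4)) :
    h (1 - l) + h l ≤ 2 * (h (1 / 4) + h (3 / 4) - h (1 / 2)) +
      l * (4 * (2 * h (1 / 2) - h (1 / 4) - h (3 / 4))) := by
  obtain ⟨hl0, hl4⟩ := hl
  have hhalf : (1 / 2 : 𝕜) ∈ Ioo 0 1 := by constructor <;> norm_num
  have hleft := hconc.neg.secant_mono_aux1 (x := l) (y := 1 / 4) (z := 1 / 2)
    ⟨hl0, by linarith⟩ hhalf hl4 (by norm_num)
  have hright := hconc.neg.secant_mono_aux1 (x := 1 / 2) (y := 3 / 4) (z := 1 - l)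
    hhalf ⟨by linarith, by linarith⟩ (by norm_num) (by linarith)
  simp only [Pi.neg_apply] at hleft hright
  linarith

theorem add_le_of_concaveOn_Ioo_of_add_eq_half {h : 𝕜 → 𝕜}
    (hconc : ConcaveOn 𝕜 (Ioo 0 1) h) {s t : 𝕜} (hs : 0 < s) (ht : 0 < t) (hst : s + t = 1 / 2) :
    h s + h t ≤ 2 * h (1 / 4) ∧ h (1 - s) + h (1 - t) ≤ 2 * h (3 / 4) := by
  constructor <;>
    exact add_le_two_mul_of_concaveOn_s16 hconc ⟨by linarith, by linarith⟩ ⟨by linarith, by linarith⟩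
      (by linarith)

namespace IsHJensenPair

section Module

variable {E : Type*} [AddCommMonoid E] [Module 𝕜 E] {h : 𝕜 → 𝕜} {S : Set E} {f g : E → 𝕜}

theorem le_half_mul_add (hfg : IsHJensenPair h S f g) {x y m : E} (hx : x ∈ S) (hy : y ∈ S)
    (hm : x + y = m + m) : f m ≤ h (1 / 2) * (g x + g y) := by
  have hle := hfg x hx y hy (1 / 2) ⟨by norm_num, by norm_num⟩
  rwa [sub_half, ← smul_add, hm, smul_add, ← add_smul, add_halves, one_smul, ← mul_add] at hle

theorem self_le (hfg : IsHJensenPair h S f g) (hconc : ConcaveOn 𝕜 (Ioo 0 1) h) {m : E}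
    (hm : m ∈ S) (hgm : 0 ≤ g m) :
    f m ≤ 2 * (h (1 / 4) + h (3 / 4) - h (1 / 2)) * g m := by
  refine le_of_forall_mem_Ioo_le_add_mul (δ := 1 / 4)
    (c := 4 * (2 * h (1 / 2) - h (1 / 4) - h (3 / 4)) * g m) (by norm_num) fun l hl => ?_
  have hfm : f m ≤ (h (1 - l) + h l) * g m := by
    have hle := hfg m hm m hm l ⟨hl.1, hl.2.trans (by norm_num)⟩
    rwa [← add_smul, sub_add_cancel, one_smul, ← add_mul] at hle
  linarith [mul_le_mul_of_nonneg_right (add_symm_le_of_concaveOn_Ioo hconc hl) hgm]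

theorem add_le_of_weights_add_eq_half (hfg : IsHJensenPair h S f g)
    (hconc : ConcaveOn 𝕜 (Ioo 0 1) h) {m z : E} (hm : m ∈ S) (hz : z ∈ S) (hgm : 0 ≤ g m)
    (hgz : 0 ≤ g z) {s t : 𝕜} (hs : 0 < s) (ht : 0 < t) (hst : s + t = 1 / 2) :
    f ((1 - s) • m + s • z) + f ((1 - t) • m + t • z) ≤
      2 * h (3 / 4) * g m + 2 * h (1 / 4) * g z := by
  obtain ⟨hle, hle_compl⟩ := add_le_of_concaveOn_Ioo_of_add_eq_half hconc hs ht hst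
  calc f ((1 - s) • m + s • z) + f ((1 - t) • m + t • z)
      ≤ (h (1 - s) * g m + h s * g z) + (h (1 - t) * g m + h t * g z) :=
        add_le_add (hfg m hm z hz s ⟨hs, by linarith⟩) (hfg m hm z hz t ⟨ht, by linarith⟩)
    _ = (h (1 - s) + h (1 - t)) * g m + (h s + h t) * g z := by ring
    _ ≤ 2 * h (3 / 4) * g m + 2 * h (1 / 4) * g z := by gcongr

end Module

variable {h f g : 𝕜 → 𝕜} {I : Set 𝕜} {x y z m : 𝕜}

theorem add_add_le_of_eq_mean (hfg : IsHJensenPair h I f g) (hconc : ConcaveOn 𝕜 (Ioo 0 1) h)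
    (hx : x ∈ I) (hy : y ∈ I) (hm : m ∈ I) (hgm : 0 ≤ g m) (hmean : x + y = 2 * m) :
    f ((x + y) / 2) + f ((y + m) / 2) + f ((m + x) / 2) ≤
      h (1 / 2) * (g x + g y) + 2 * h (1 / 4) * g m + 2 * h (3 / 4) * g m := by
  have hxy : (x + y) / 2 = m := by linarith
  rw [hxy]
  linarith [hfg.self_le hconc hm hgm, hfg.le_half_mul_add hy hm (add_halves (y + m)).symm,
    hfg.le_half_mul_add hm hx (add_halves (m + x)).symm]

theorem add_add_le_of_same_side (hfg : IsHJensenPair h I f g) (hconc : ConcaveOn 𝕜 (Ioo 0 1) h)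
    (hx : x ∈ I) (hy : y ∈ I) (hz : z ∈ I) (hm : m ∈ I) (hgz : 0 ≤ g z) (hgm : 0 ≤ g m)
    (hmean : x + y + z = 3 * m) (hside : 0 < (x - m) * (y - m)) :
    f ((x + y) / 2) + f ((y + z) / 2) + f ((z + x) / 2) ≤
      h (1 / 2) * (g x + g y) + 2 * h (1 / 4) * g z + 2 * h (3 / 4) * g m := by
  obtain ⟨a, rfl⟩ : ∃ a, x = m + a := ⟨x - m, by ring⟩
  obtain ⟨b, rfl⟩ : ∃ b, y = m + b := ⟨y - m, by ring⟩
  obtain rfl : z = m - (a + b) := by linarith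
  rw [add_sub_cancel_left, add_sub_cancel_left] at hside
  have ha : 0 < a / (a + b) := div_add_pos_of_mul_pos hside
  have hb : 0 < b / (a + b) := by
    rw [add_comm]
    exact div_add_pos_of_mul_pos (by rwa [mul_comm])
  have hab : a + b ≠ 0 := (div_ne_zero_iff.1 ha.ne').2
  have hsum := hfg.add_le_of_weights_add_eq_half hconc hm hz hgm hgz (half_pos ha) (half_pos hb)
    (by field_simp)
  have hyz : (1 - a / (a + b) / 2) • m + (a / (a + b) / 2) • (m - (a + b)) =
      (m + b + (m - (a + b))) / 2 := by
    simp only [smul_eq_mul]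
    field_simp
    ring
  have hzx : (1 - b / (a + b) / 2) • m + (b / (a + b) / 2) • (m - (a + b)) =
      (m - (a + b) + (m + a)) / 2 := by
    simp only [smul_eq_mul]
    field_simp
    ring
  rw [hyz, hzx] at hsum
  linarith [hfg.le_half_mul_add hx hy (add_halves (m + a + (m + b))).symm]

theorem popoviciu_of_same_side_or_eq_mean (hfg : IsHJensenPair h I f g)
    (hconc : ConcaveOn 𝕜 (Ioo 0 1) h) (hg : ∀ t ∈ I, 0 ≤ g t) (hx : x ∈ I) (hy : y ∈ I)
    (hz : z ∈ I) (hm : m ∈ I) (hmean : x + y + z = 3 * m)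
    (hcase : 0 < (x - m) * (y - m) ∨ z - m = 0) :
    f ((x + y) / 2) + f ((y + z) / 2) + f ((z + x) / 2) ≤
      max (h (1 / 2)) (2 * h (1 / 4)) * (g x + g y + g z) + 2 * h (3 / 4) * g m := by
  have hgxy : 0 ≤ g x + g y := add_nonneg (hg x hx) (hg y hy)
  have hgz := hg z hz
  calc f ((x + y) / 2) + f ((y + z) / 2) + f ((z + x) / 2)
      ≤ h (1 / 2) * (g x + g y) + 2 * h (1 / 4) * g z + 2 * h (3 / 4) * g m := by
        rcases hcase with hside | hzm
        · exact hfg.add_add_le_of_same_side hconc hx hy hz hm hgz (hg m hm) hmean hside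
        · obtain rfl := sub_eq_zero.1 hzm
          exact hfg.add_add_le_of_eq_mean hconc hx hy hm hgz (by linarith)
    _ ≤ max (h (1 / 2)) (2 * h (1 / 4)) * (g x + g y) +
          max (h (1 / 2)) (2 * h (1 / 4)) * g z + 2 * h (3 / 4) * g m := by
        gcongr
        exacts [le_max_left _ _, le_max_right _ _]
    _ = max (h (1 / 2)) (2 * h (1 / 4)) * (g x + g y + g z) + 2 * h (3 / 4) * g m := by ring

end IsHJensenPair

theorem popoviciu_h_jensen_pair_general {h f g : 𝕜 → 𝕜} {I : Set 𝕜}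
    (hconc : ConcaveOn 𝕜 (Ioo 0 1) h) (hI : Convex 𝕜 I) (hg : ∀ t ∈ I, 0 ≤ g t)
    (hfg : IsHJensenPair h I f g) {x y z : 𝕜} (hx : x ∈ I) (hy : y ∈ I) (hz : z ∈ I) :
    f ((x + y) / 2) + f ((y + z) / 2) + f ((z + x) / 2) ≤
      max (h (1 / 2)) (2 * h (1 / 4)) * (g x + g y + g z) +
        2 * h (3 / 4) * g ((x + y + z) / 3) := by
  have hm : (x + y + z) / 3 ∈ I := by
    have hxy := hI hx hy one_half_pos.le one_half_pos.le (add_halves 1)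
    convert hI hxy hz (by norm_num : (0 : 𝕜) ≤ 2 / 3) (by norm_num : (0 : 𝕜) ≤ 1 / 3)
      (by norm_num) using 1
    simp only [smul_eq_mul]
    ring
  set m := (x + y + z) / 3 with hm_def
  have hmean : x + y + z = 3 * m := by linarith
  rcases mul_pos_or_eq_zero_of_three (x - m) (y - m) (z - m) with hxy | hyz | hzx
  · exact hfg.popoviciu_of_same_side_or_eq_mean hconc hg hx hy hz hm hmean hxy
  · linarith [hfg.popoviciu_of_same_side_or_eq_mean hconc hg hy hz hx hm (by linarith) hyz]
  · linarith [hfg.popoviciu_of_same_side_or_eq_mean hconc hg hz hx hy hm (by linarith) hzx]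

end

/-- Popoviciu-type inequality for `h`-Jensen pairs of positive functions. -/
theorem popoviciu_h_jensen_pair (h : ℝ → ℝ)
    (hpos : ∀ l ∈ Set.Ioo (0 : ℝ) 1, 0 < h l)
    (hconc : ConcaveOn ℝ (Set.Ioo (0 : ℝ) 1) h)
    (hsum : ∀ l ∈ Set.Ioo (0 : ℝ) 1, 1 ≤ h l + h (1 - l))
    (I : Set ℝ) (hI : Convex ℝ I) (f g : ℝ → ℝ)
    (hfpos : ∀ t ∈ I, 0 < f t) (hgpos : ∀ t ∈ I, 0 < g t)
    (hpair : ∀ x ∈ I, ∀ y ∈ I, ∀ l ∈ Set.Ioo (0 : ℝ) 1,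
      f ((1 - l) * x + l * y) ≤ h (1 - l) * g x + h l * g y) :
    ∀ x ∈ I, ∀ y ∈ I, ∀ z ∈ I,
      max (h (1 / 2)) (2 * h (1 / 4)) * (g x + g y + g z) +
          2 * h (3 / 4) * g ((x + y + z) / 3) ≥
        f ((x + y) / 2) + f ((y + z) / 2) + f ((z + x) / 2) :=
  fun _ hx _ hy _ hz =>
    popoviciu_h_jensen_pair_general hconc hI (fun t ht => (hgpos t ht).le) hpair hx hy hz
end
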